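/- Let q and K be positive integers, and set γ = 1/q and x = qK. Then for every positive integer M, as t → 0⁺, log W_γ(x, t) = −γx · Σ_{k≥1, 2k−1≤M} B_{2k}·t^{2k−1}/(2k(2k−1)) + Σ_{δ=1}^{M} (t^δ/(δ(δ+1))) · Σ_{r=1}^{δ+1} C(δ+1, r)·B_{δ+1−r} · ( x^r·(−1)^{δ+1−r}/γ^{δ−r} − Σ_{m=1}^{r+1} C(r+1, m)·(B_{r+1−m}/(r+1))·(x^m/γ^{r−m})·(−1)^{δ−m} ) + O(t^{M+1}). -/

import Mathlib

open MeasureTheory Filter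

/-- The (real-valued) quantity `W_γ(N,t)`: the ratio of the Mehta-type integral
`∫_{ℝ^N} ∏_{i<j} |λ_j - λ_i|^{2γ} ∏_j e^{-iγλ_j/√t} (1 - i√t λ_j)^{-γ/t} dλ`
(a real number, here extracted as the real part of the complex integral) to the
Gaussian integral `∫_{ℝ^N} ∏_{i<j} |λ_j - λ_i|^{2γ} e^{-(γ/2)∑_j λ_j²} dλ`. -/
noncomputable def Wre (γ : ℝ) (N : ℕ) (t : ℝ) : ℝ :=
    (∫ l : Fin N → ℝ,
        (∏ i : Fin N, ∏ j ∈ Finset.Ioi i, ((|l j - l i| ^ (2 * γ) : ℝ) : ℂ)) *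
          ∏ j : Fin N,
            Complex.exp (-(Complex.I * γ * (l j) / Real.sqrt t)) *
              (1 - Complex.I * Real.sqrt t * (l j)) ^ ((-(γ / t) : ℝ) : ℂ)).re /
      (∫ l : Fin N → ℝ,
          (∏ i : Fin N, ∏ j ∈ Finset.Ioi i, |l j - l i| ^ (2 * γ)) *
            Real.exp (-(γ / 2) * ∑ j, (l j) ^ 2))

/-!
Put `z = γ / t`. After rescaling the variables, the numerator of `W_γ(N, γ / z)` is a Mehta-type
integral with weight `exp(-i b x) (1 - i x) ^ (-z)` in each variable. Aomoto's argument lowers the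
exponents one variable at a time: integrating by parts and using the antisymmetry in two variables
to eliminate the terms `1 / (λ_j - λ_i)`, it expresses the integral with exponents `z` by the one
with exponents `z + 1`, with factor `∏_{s < N} (z - γ s)`. Hence `log W_γ(N, γ / z)` satisfies the
difference equation of the remainder in Stirling's formula for `∏_{s < N} Γ(z - γ s)`. It tends to
`0` as `z → ∞` by dominated convergence, so it is determined by this equation and telescoping gives
its expansion. Bernoulli polynomial identities bring the coefficients into the required form.
-/

open Finset Topology Asymptotics

section Telescoping

lemma abs_le_of_abs_sub_succ_le {f g : ℕ → ℝ} (hf : Tendsto f atTop (𝓝 0))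
    (hg : Tendsto g atTop (𝓝 0)) (h : ∀ n, |f n - f (n + 1)| ≤ g n - g (n + 1)) (n : ℕ) :
    |f n| ≤ g n := by
  have hsub : Antitone (g - f) := antitone_nat_of_succ_le fun k => by
    have := (abs_le.1 (h k)).2
    simp only [Pi.sub_apply]
    linarith
  have hadd : Antitone (g + f) := antitone_nat_of_succ_le fun k => by
    have := (abs_le.1 (h k)).1
    simp only [Pi.add_apply]
    linarith
  have hsub_nonneg := hsub.le_of_tendsto (sub_zero (0 : ℝ) ▸ hg.sub hf) n
  have hadd_nonneg := hadd.le_of_tendsto (add_zero (0 : ℝ) ▸ hg.add hf) n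
  simp only [Pi.sub_apply, Pi.add_apply] at hsub_nonneg hadd_nonneg
  exact abs_le.2 ⟨by linarith, by linarith⟩

lemma inv_pow_add_two_le (n : ℕ) {z : ℝ} (hz : 1 ≤ z) :
    z⁻¹ ^ (n + 2) ≤ 2 * (z⁻¹ ^ (n + 1) - (z + 1)⁻¹ ^ (n + 1)) := by
  have hz0 : 0 < z := by linarith
  have hinv : z⁻¹ ^ 2 ≤ 2 * (z⁻¹ - (z + 1)⁻¹) := by
    rw [inv_sub_inv hz0.ne' (by positivity), add_sub_cancel_left, inv_pow, inv_eq_one_div,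
      mul_one_div, div_le_div_iff₀ (by positivity) (by positivity)]
    nlinarith
  have hle : (z + 1)⁻¹ ≤ z⁻¹ := by gcongr; linarith
  calc z⁻¹ ^ (n + 2) = z⁻¹ ^ n * z⁻¹ ^ 2 := pow_add _ _ _
    _ ≤ z⁻¹ ^ n * (2 * (z⁻¹ - (z + 1)⁻¹)) := by gcongr
    _ = 2 * (z⁻¹ ^ (n + 1) - z⁻¹ ^ n * (z + 1)⁻¹) := by ring
    _ ≤ 2 * (z⁻¹ ^ (n + 1) - (z + 1)⁻¹ ^ (n + 1)) := by
      rw [pow_succ (z + 1)⁻¹]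
      gcongr

theorem isBigO_inv_pow_of_sub_add_one {f : ℝ → ℝ} (n : ℕ) (hf : Tendsto f atTop (𝓝 0))
    (h : (fun z => f z - f (z + 1)) =O[atTop] fun z => z⁻¹ ^ (n + 2)) :
    f =O[atTop] fun z => z⁻¹ ^ (n + 1) := by
  obtain ⟨C, hC⟩ := h.bound
  obtain ⟨z₀, hz₀⟩ := eventually_atTop.1 hC
  refine IsBigO.of_bound (2 * C) ?_
  filter_upwards [eventually_ge_atTop (max z₀ 1)] with z hz
  have hz1 : 1 ≤ z := le_of_max_le_right hz
  have hC0 : 0 ≤ C := nonneg_of_mul_nonneg_left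
    ((norm_nonneg _).trans (hz₀ z (le_of_max_le_left hz)))
    (norm_pos_iff.2 (pow_ne_zero _ (inv_ne_zero (zero_lt_one.trans_le hz1).ne')))
  have hatTop : Tendsto (fun i : ℕ => z + i) atTop atTop :=
    tendsto_atTop_add_const_left _ _ tendsto_natCast_atTop_atTop
  have hpow : Tendsto (fun z : ℝ => 2 * C * z⁻¹ ^ (n + 1)) atTop (𝓝 0) := by
    simpa using (tendsto_inv_atTop_zero.pow (n + 1)).const_mul (2 * C)
  have hstep (i : ℕ) : |f (z + i) - f (z + (i + 1 : ℕ))| ≤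
      2 * C * (z + i)⁻¹ ^ (n + 1) - 2 * C * (z + (i + 1 : ℕ))⁻¹ ^ (n + 1) := by
    have hi : z ≤ z + i := le_add_of_nonneg_right i.cast_nonneg
    have hw : 0 < z + i := by linarith
    push_cast
    rw [← add_assoc]
    calc |f (z + i) - f (z + i + 1)| ≤ C * (z + i)⁻¹ ^ (n + 2) := by
          simpa [abs_of_pos hw] using hz₀ _ ((le_of_max_le_left hz).trans hi)
      _ ≤ C * (2 * ((z + i)⁻¹ ^ (n + 1) - (z + i + 1)⁻¹ ^ (n + 1))) := by
          gcongr
          exact inv_pow_add_two_le n (hz1.trans hi)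
      _ = _ := by ring
  have := abs_le_of_abs_sub_succ_le (hf.comp hatTop) (hpow.comp hatTop) hstep 0
  simpa [abs_of_pos (zero_lt_one.trans_le hz1)] using this

end Telescoping

section Stirling

lemma isBigO_pow_of_hasSum {f : ℝ → ℝ} {a : ℕ → ℝ} {r : ℝ} (hr : 0 < r) (d m : ℕ)
    (h : ∀ t ∈ Set.Ioo 0 r, HasSum (fun n => a n * t ^ (n + d)) (f t))
    (ha : ∀ n < m, a n = 0) :
    f =O[𝓝[>] 0] fun t => t ^ (m + d) := by
  have htail (t : ℝ) (ht : t ∈ Set.Ioo 0 r) :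
      HasSum (fun n => t ^ (m + d) * (a (n + m) * t ^ n)) (f t) := by
    have hzero : ∑ n ∈ range m, a n * t ^ (n + d) = 0 :=
      sum_eq_zero fun n hn => by rw [ha n (mem_range.1 hn), zero_mul]
    have := (hasSum_nat_add_iff' m).2 (h t ht)
    rw [hzero, sub_zero] at this
    exact this.congr_fun fun n => by ring
  have hr2 : r / 2 ∈ Set.Ioo 0 r := ⟨by linarith, by linarith⟩
  have hsum : Summable fun n => |a (n + m) * (r / 2) ^ n| :=
    ((summable_mul_left_iff (pow_pos hr2.1 (m + d)).ne').1 (htail _ hr2).summable).abs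
  refine IsBigO.of_bound (∑' n, |a (n + m) * (r / 2) ^ n|) ?_
  filter_upwards [Ioo_mem_nhdsGT hr2.1] with t ht
  have ht0 : 0 ≤ t := ht.1.le
  have hle (n : ℕ) : ‖a (n + m) * t ^ n‖ ≤ |a (n + m) * (r / 2) ^ n| := by
    rw [Real.norm_eq_abs, abs_mul, abs_mul, abs_of_nonneg (pow_nonneg ht0 n),
      abs_of_nonneg (pow_nonneg hr2.1.le n)]
    gcongr
    exact ht.2.le
  rw [← (htail t ⟨ht.1, ht.2.trans hr2.2⟩).tsum_eq, tsum_mul_left, norm_mul, mul_comm]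
  gcongr
  exact tsum_of_norm_bounded hsum.hasSum hle

lemma hasSum_log_one_add_mul (c : ℝ) {t : ℝ} (h : |c * t| < 1) :
    HasSum (fun n : ℕ => -(-c) ^ (n + 1) / (n + 1) * t ^ (n + 1)) (Real.log (1 + c * t)) := by
  have := (Real.hasSum_pow_div_log_of_abs_lt_one (x := -(c * t)) (by rwa [abs_neg])).neg
  rw [neg_neg, sub_neg_eq_add] at this
  exact this.congr_fun fun n => by rw [← neg_mul, mul_pow]; ring

lemma hasSum_inv_mul_log_one_add_sub_one {t : ℝ} (h0 : 0 < t) (h1 : t < 1) :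
    HasSum (fun n : ℕ => (-1) ^ (n + 1) / (n + 2) * t ^ (n + 1)) (t⁻¹ * Real.log (1 + t) - 1) := by
  have h := (hasSum_log_one_add_mul 1 (by rwa [one_mul, abs_of_pos h0])).mul_left t⁻¹
  have h' := (hasSum_nat_add_iff' 1).2 h
  rw [sum_range_one, one_mul] at h'
  convert! h' using 1
  · funext n
    push_cast
    field_simp
    ring
  · simp [h0.ne']

lemma hasSum_div_one_add_pow (k : ℕ) {t : ℝ} (h0 : 0 < t) (h1 : t < 1) :
    HasSum (fun n : ℕ => (-1) ^ (n + k) * (n.choose k : ℝ) * t ^ (n + 1))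
      ((t / (1 + t)) ^ (k + 1)) := by
  have h := (hasSum_choose_mul_geometric_of_norm_lt_one k (r := -t)
    (by rwa [norm_neg, Real.norm_of_nonneg h0.le])).mul_left (t ^ (k + 1))
  have hzero : ∑ n ∈ range k, (-1) ^ (n + k) * (n.choose k : ℝ) * t ^ (n + 1) = 0 :=
    sum_eq_zero fun n hn => by rw [Nat.choose_eq_zero_of_lt (mem_range.1 hn)]; simp
  rw [← hasSum_nat_add_iff' k, hzero, sub_zero]
  convert! h using 1
  · funext n
    rw [show n + k + k = n + 2 * k by ring, pow_add, pow_mul, neg_pow t]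
    norm_num
    ring
  · rw [div_pow, sub_neg_eq_add]; ring

/-- The coefficient of `z ^ (-(k + 1))` in the asymptotic expansion of `log Γ(z + y)`. -/
noncomputable def stirlingCoeff (k : ℕ) (y : ℝ) : ℝ :=
  (-1) ^ k * Polynomial.aeval y (Polynomial.bernoulli (k + 2)) / ((k + 1) * (k + 2))

/-- The asymptotic expansion of `log (Γ(z + y) / √(2π))` as `z → ∞`, truncated after the term
`z ^ (-M)`. -/
noncomputable def stirlingSeries (M : ℕ) (y z : ℝ) : ℝ :=
  (z + y - 1 / 2) * Real.log z - z + ∑ k ∈ range M, stirlingCoeff k y * z⁻¹ ^ (k + 1)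

lemma choose_add_two_mul (n k : ℕ) :
    ((n + 2).choose (k + 2) : ℝ) * ((k + 1) * (k + 2)) = (n + 1) * (n + 2) * n.choose k := by
  have h₁ := Nat.add_one_mul_choose_eq (n + 1) (k + 1)
  have h₂ := Nat.add_one_mul_choose_eq n k
  have h₁' : ((n : ℝ) + 2) * (n + 1).choose (k + 1) = (n + 2).choose (k + 2) * (k + 2) := by
    exact_mod_cast h₁
  have h₂' : ((n : ℝ) + 1) * n.choose k = (n + 1).choose (k + 1) * (k + 1) := by
    exact_mod_cast h₂
  linear_combination -(k + 1) * h₁' - (n + 2) * h₂'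

lemma sum_choose_mul_stirlingCoeff (n : ℕ) (y : ℝ) :
    ∑ k ∈ range n, (-1) ^ k * n.choose k * stirlingCoeff k y =
      y ^ (n + 1) / (n + 1) - (y - 1 / 2) / (n + 1) - 1 / ((n + 1) * (n + 2)) := by
  have h := congrArg (Polynomial.aeval y) (Polynomial.sum_bernoulli (n + 1))
  simp only [sum_range_succ', map_add, map_sum, Polynomial.aeval_monomial, zero_add,
    Nat.choose_one_right, Nat.choose_zero_right, Polynomial.bernoulli_zero,
    Polynomial.bernoulli_one, map_one, Algebra.smul_def] at h
  have hterm (k : ℕ) : (-1) ^ k * n.choose k * stirlingCoeff k y * ((n + 1) * (n + 2)) =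
      (n + 2).choose (k + 2) * Polynomial.aeval y (Polynomial.bernoulli (k + 2)) := by
    have hsign : (-1 : ℝ) ^ k * (-1) ^ k = 1 := by rw [← mul_pow]; simp
    rw [stirlingCoeff]
    field_simp
    linear_combination Polynomial.aeval y (Polynomial.bernoulli (k + 2)) *
      (n.choose k * ((n + 1) * (n + 2)) * hsign - choose_add_two_mul n k)
  have hsum : (∑ k ∈ range n, (-1) ^ k * n.choose k * stirlingCoeff k y) * ((n + 1) * (n + 2)) =
      (n + 2) * y ^ (n + 1) - (n + 2) * (y - 1 / 2) - 1 := by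
    rw [sum_mul, sum_congr rfl fun k _ => hterm k]
    norm_num at h
    linear_combination h
  rw [eq_comm, ← mul_left_inj' (by positivity : ((n : ℝ) + 1) * (n + 2) ≠ 0), hsum]
  field_simp

lemma stirlingSeries_coeff_eq_zero (M n : ℕ) (hn : n < M + 1) (y : ℝ) :
    (-1) ^ (n + 1) / (n + 2) + (y + 1 / 2) * (-(-1) ^ (n + 1) / (n + 1)) -
        -(-y) ^ (n + 1) / (n + 1) +
      ∑ k ∈ range M, stirlingCoeff k y * ((-1) ^ (n + k) * n.choose k - if n = k then 1 else 0) =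
      0 := by
  have hterm (k : ℕ) (hk : n ≤ k) :
      (-1 : ℝ) ^ (n + k) * n.choose k - (if n = k then 1 else 0) = 0 := by
    rcases hk.eq_or_lt with rfl | hk
    · rw [← two_mul, pow_mul]; simp
    · simp [Nat.choose_eq_zero_of_lt hk, hk.ne]
  have hsum : ∑ k ∈ range M,
      stirlingCoeff k y * ((-1) ^ (n + k) * n.choose k - if n = k then 1 else 0) =
      (-1) ^ n * ∑ k ∈ range n, (-1) ^ k * n.choose k * stirlingCoeff k y := by
    rw [mul_sum, ← sum_subset (range_subset_range.2 (Nat.lt_succ_iff.1 hn))]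
    · refine sum_congr rfl fun k hk => ?_
      rw [if_neg (mem_range.1 hk).ne', pow_add]
      ring
    · intro k _ hk
      rw [hterm k (by simpa using hk), mul_zero]
  rw [hsum, sum_choose_mul_stirlingCoeff, neg_pow y, pow_succ (-1 : ℝ)]
  field_simp
  ring

lemma hasSum_stirlingSeries_step (M : ℕ) (y : ℝ) {t : ℝ} (h0 : 0 < t) (h1 : t < 1)
    (hy : |y * t| < 1) :
    HasSum (fun n : ℕ => ((-1) ^ (n + 1) / (n + 2) + (y + 1 / 2) * (-(-1) ^ (n + 1) / (n + 1)) -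
        -(-y) ^ (n + 1) / (n + 1) + ∑ k ∈ range M, stirlingCoeff k y *
          ((-1) ^ (n + k) * n.choose k - if n = k then 1 else 0)) * t ^ (n + 1))
      (t⁻¹ * Real.log (1 + t) - 1 + (y + 1 / 2) * Real.log (1 + t) - Real.log (1 + y * t) +
        ∑ k ∈ range M, stirlingCoeff k y * ((t / (1 + t)) ^ (k + 1) - t ^ (k + 1))) := by
  have hlog := (hasSum_log_one_add_mul 1 (by rwa [one_mul, abs_of_pos h0])).mul_left (y + 1 / 2)
  rw [one_mul] at hlog
  have hpow (k : ℕ) : HasSum (fun n => (if n = k then 1 else 0) * t ^ (n + 1)) (t ^ (k + 1)) :=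
    (hasSum_ite_eq k (t ^ (k + 1))).congr_fun fun n => by
      split_ifs with h
      · rw [h, one_mul]
      · rw [zero_mul]
  have hsum := hasSum_sum (s := range M) fun k _ =>
    ((hasSum_div_one_add_pow k h0 h1).sub (hpow k)).mul_left (stirlingCoeff k y)
  refine ((((hasSum_inv_mul_log_one_add_sub_one h0 h1).add hlog).sub
    (hasSum_log_one_add_mul y hy)).add hsum).congr_fun fun n => ?_
  rw [add_mul, sum_mul]
  congr 1
  · ring
  · exact sum_congr rfl fun k _ => by ring

lemma stirlingSeries_step_isBigO (M : ℕ) (y : ℝ) :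
    (fun t => t⁻¹ * Real.log (1 + t) - 1 + (y + 1 / 2) * Real.log (1 + t) - Real.log (1 + y * t) +
        ∑ k ∈ range M, stirlingCoeff k y * ((t / (1 + t)) ^ (k + 1) - t ^ (k + 1))) =O[𝓝[>] 0]
      fun t => t ^ (M + 2) := by
  refine isBigO_pow_of_hasSum (by positivity : 0 < 1 / (1 + |y|)) 1 (M + 1) (fun t ht => ?_)
    fun n hn => stirlingSeries_coeff_eq_zero M n hn y
  have ht' := (lt_div_iff₀ (by positivity)).1 ht.2
  refine hasSum_stirlingSeries_step M y ht.1 ?_ ?_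
  · nlinarith [abs_nonneg y, ht.1]
  · rw [abs_mul, abs_of_pos ht.1]
    nlinarith [ht.1]

theorem stirlingSeries_add_one_sub_isBigO (M : ℕ) (y : ℝ) :
    (fun z => stirlingSeries M y (z + 1) - stirlingSeries M y z - Real.log (z + y)) =O[atTop]
      fun z => z⁻¹ ^ (M + 2) := by
  have h := (stirlingSeries_step_isBigO M y).comp_tendsto tendsto_inv_atTop_nhdsGT_zero
  refine h.congr' ?_ EventuallyEq.rfl
  filter_upwards [eventually_gt_atTop 0, eventually_gt_atTop (-y)] with z hz hzy
  have hlog₁ : Real.log (1 + z⁻¹) = Real.log (z + 1) - Real.log z := by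
    rw [← Real.log_div (by positivity) hz.ne', add_div, div_self hz.ne', one_div]
  have hlog₂ : Real.log (1 + y * z⁻¹) = Real.log (z + y) - Real.log z := by
    rw [← Real.log_div (by linarith) hz.ne', add_div, div_self hz.ne', div_eq_mul_inv]
  have hinv : z⁻¹ / (1 + z⁻¹) = (z + 1)⁻¹ := by field_simp
  simp only [Function.comp_apply, hlog₁, hlog₂, hinv, stirlingSeries, mul_sub,
    sum_sub_distrib, inv_inv]
  ring

/-- The right-hand side of `h` is the difference in `z` of
`∑ i ∈ s, (stirlingSeries 0 (y i) z - log (Γ(z + y i) / √(2π)))`. -/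
theorem isBigO_add_sum_stirlingCoeff {ι : Type*} (s : Finset ι) (y : ι → ℝ) {L : ℝ → ℝ}
    (hL : Tendsto L atTop (𝓝 0))
    (h : ∀ᶠ z in atTop, L z - L (z + 1) =
      ∑ i ∈ s, (stirlingSeries 0 (y i) z - stirlingSeries 0 (y i) (z + 1) + Real.log (z + y i)))
    (M : ℕ) :
    (fun z => L z + ∑ i ∈ s, ∑ k ∈ range M, stirlingCoeff k (y i) * z⁻¹ ^ (k + 1)) =O[atTop]
      fun z => z⁻¹ ^ (M + 1) := by
  have hsplit (y z : ℝ) : ∑ k ∈ range M, stirlingCoeff k y * z⁻¹ ^ (k + 1) =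
      stirlingSeries M y z - stirlingSeries 0 y z := by
    simp [stirlingSeries]
  refine isBigO_inv_pow_of_sub_add_one M ?_ ?_
  · have hpow (k : ℕ) : Tendsto (fun z : ℝ => z⁻¹ ^ (k + 1)) atTop (𝓝 0) := by
      simpa using (tendsto_inv_atTop_zero (𝕜 := ℝ)).pow (k + 1)
    simpa using hL.add (tendsto_finsetSum s fun i _ => tendsto_finsetSum (range M) fun k _ =>
      (hpow k).const_mul (stirlingCoeff k (y i)))
  · refine (IsBigO.fun_sum fun i (_ : i ∈ s) =>
      (stirlingSeries_add_one_sub_isBigO M (y i)).neg_left).congr' ?_ EventuallyEq.rfl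
    filter_upwards [h] with z hz
    simp only [hsplit]
    rw [add_sub_add_comm, hz, ← sum_sub_distrib, ← sum_add_distrib]
    exact sum_congr rfl fun i _ => by ring

end Stirling

section BernoulliSums

lemma sum_Icc_one (f : ℕ → ℝ) (n : ℕ) : ∑ m ∈ Icc 1 n, f m = ∑ m ∈ range n, f (m + 1) := by
  rw [range_eq_Ico, sum_Ico_add' f, zero_add, Ico_add_one_right_eq_Icc]

lemma sum_sum_choose_mul_comm (b : ℕ → ℝ) (f : ℕ → ℕ → ℝ) (n : ℕ) :
    ∑ r ∈ range (n + 1), ∑ m ∈ range (r + 1),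
        n.choose r * r.choose m * (b (n - r) * b (r - m)) * f m (r - m) =
      ∑ r ∈ range (n + 1), ∑ m ∈ range (r + 1),
        n.choose r * r.choose m * (b (n - r) * b (r - m)) * f m (n - r) := by
  have hswap (g : ℕ → ℕ → ℝ) : ∑ r ∈ range (n + 1), ∑ m ∈ range (r + 1), g r m =
      ∑ m ∈ range (n + 1), ∑ j ∈ range (n + 1 - m), g (m + j) m := by
    simp only [sum_sigma']
    refine sum_bij' (fun p _ => ⟨p.2, p.1 - p.2⟩) (fun p _ => ⟨p.1 + p.2, p.1⟩) ?_ ?_ ?_ ?_ ?_ <;>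
      · rintro ⟨r, m⟩ h
        simp only [mem_sigma, mem_range] at h ⊢
        grind
  rw [hswap, hswap]
  refine sum_congr rfl fun m hm => ?_
  rw [← sum_range_reflect]
  refine sum_congr rfl fun j hj => ?_
  obtain ⟨i, rfl⟩ : ∃ i, n = m + j + i := ⟨n - m - j, by simp at hm hj; omega⟩
  have hchoose : ((m + j + i).choose (m + i) * (m + i).choose m : ℝ) =
      (m + j + i).choose (m + j) * (m + j).choose m := by
    have h₁ := Nat.choose_mul (n := m + j + i) (k := m + i) (s := m) (by omega)
    have h₂ := Nat.choose_mul (n := m + j + i) (k := m + j) (s := m) (by omega)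
    have h₃ := Nat.choose_symm_add (a := j) (b := i)
    rw [show m + j + i - m = j + i by omega, Nat.add_sub_cancel_left] at h₁ h₂
    exact_mod_cast (h₁.trans (by rw [h₃])).trans h₂.symm
  rw [show m + j + i + 1 - m - 1 - j = i by omega, show m + j + i - (m + i) = j by omega,
    show m + j + i - (m + j) = i by omega, Nat.add_sub_cancel_left, Nat.add_sub_cancel_left,
    hchoose]
  ring

lemma choose_succ_div (r m : ℕ) :
    ((r + 1).choose (m + 1) / (r + 1) : ℝ) = r.choose m / (m + 1) := by
  rw [div_eq_div_iff (by positivity) (by positivity)]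
  exact_mod_cast by linarith [Nat.add_one_mul_choose_eq r m]

lemma sum_choose_mul_bernoulli'_mul_pow (N r : ℕ) :
    ∑ m ∈ range (r + 1), r.choose m * (bernoulli' (r - m) : ℝ) * ((N : ℝ) ^ (m + 1) / (m + 1)) =
      ∑ s ∈ range N, ((s : ℝ) + 1) ^ r := by
  have h := congrArg ((↑) : ℚ → ℝ) (sum_Ico_pow N r)
  rw [← sum_Ico_add' _ 0 N 1, ← range_eq_Ico,
    ← sum_range_reflect _ (r + 1)] at h
  push_cast at h
  rw [h]
  refine sum_congr rfl fun m hm => ?_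
  have hm' : m ≤ r := Nat.lt_succ_iff.1 (mem_range.1 hm)
  rw [show r + 1 - (r - m) = m + 1 by omega,
    show r - m = r + 1 - (m + 1) by omega, Nat.choose_symm (by omega)]
  linear_combination -(bernoulli' (r + 1 - (m + 1)) * (N : ℝ) ^ (m + 1)) * choose_succ_div r m

lemma aeval_neg_bernoulli (n : ℕ) (y : ℝ) :
    Polynomial.aeval (-y) (Polynomial.bernoulli n) =
      (-1) ^ n * ∑ r ∈ range (n + 1), n.choose r * (bernoulli' (n - r) : ℝ) * y ^ r := by
  rw [Polynomial.bernoulli_def, map_sum, mul_sum]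
  refine sum_congr rfl fun r hr => ?_
  have hsign : (-1 : ℝ) ^ n * (-1) ^ (n - r) = (-1) ^ r := by
    obtain ⟨k, rfl⟩ := Nat.exists_eq_add_of_le (Nat.lt_succ_iff.1 (mem_range.1 hr))
    rw [Nat.add_sub_cancel_left, pow_add, mul_assoc, ← mul_pow]
    simp
  rw [Polynomial.aeval_monomial, neg_pow y, ← hsign, bernoulli'_eq_bernoulli]
  push_cast [eq_ratCast]
  ring

lemma sum_bernoulli'_mul_sum_bernoulli' (N n : ℕ) {γ : ℝ} :
    ∑ r ∈ range (n + 1), n.choose r * (bernoulli' (n - r) : ℝ) * ∑ m ∈ range (r + 1),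
        r.choose m * (bernoulli' (r - m) : ℝ) *
          ((N : ℝ) ^ (m + 1) / (m + 1) * γ ^ ((m : ℤ) + 1 - r)) =
      ∑ r ∈ range (n + 1), n.choose r * (bernoulli' (n - r) : ℝ) * γ ^ ((r : ℤ) + 1 - n) *
        ∑ s ∈ range N, ((s : ℝ) + 1) ^ r := by
  have hcomm := sum_sum_choose_mul_comm (fun i => (bernoulli' i : ℝ))
    (fun m j => (N : ℝ) ^ (m + 1) / (m + 1) * γ ^ (1 - (j : ℤ))) n
  calc _ = ∑ r ∈ range (n + 1), ∑ m ∈ range (r + 1), n.choose r * r.choose m *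
        ((bernoulli' (n - r) : ℝ) * bernoulli' (r - m)) *
          ((N : ℝ) ^ (m + 1) / (m + 1) * γ ^ (1 - ((r - m : ℕ) : ℤ))) := by
        refine sum_congr rfl fun r _ => ?_
        rw [mul_sum]
        refine sum_congr rfl fun m hm => ?_
        rw [show (m : ℤ) + 1 - r = 1 - ((r - m : ℕ) : ℤ) by have := mem_range.1 hm; omega]
        ring
    _ = _ := hcomm
    _ = _ := by
        refine sum_congr rfl fun r hr => ?_
        rw [← sum_choose_mul_bernoulli'_mul_pow, mul_sum,
          show (r : ℤ) + 1 - n = 1 - ((n - r : ℕ) : ℤ) by have := mem_range.1 hr; omega]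
        exact sum_congr rfl fun m _ => by ring

lemma sum_bernoulli'_mul_pow_sub (N n : ℕ) {γ : ℝ} (hγ : γ ≠ 0) :
    ∑ r ∈ range (n + 1), n.choose r * (bernoulli' (n - r) : ℝ) * γ ^ ((r : ℤ) + 1 - n) *
        ((N : ℝ) ^ r - ∑ s ∈ range N, ((s : ℝ) + 1) ^ r) =
      γ ^ (1 - n : ℤ) * (bernoulli' n -
        (-1) ^ n * ∑ s ∈ range N, Polynomial.aeval (-(γ * s)) (Polynomial.bernoulli n)) := by
  have hzpow (r : ℕ) : γ ^ ((r : ℤ) + 1 - n) = γ ^ (1 - n : ℤ) * γ ^ r := by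
    rw [← zpow_natCast, ← zpow_add₀ hγ]
    congr 1
    ring
  have htelescope (r : ℕ) : (N : ℝ) ^ r - ∑ s ∈ range N, ((s : ℝ) + 1) ^ r =
      0 ^ r - ∑ s ∈ range N, (s : ℝ) ^ r := by
    have := sum_range_sub (fun s : ℕ => (s : ℝ) ^ r) N
    push_cast at this
    rw [sum_sub_distrib] at this
    linear_combination -this
  have hzero : ∑ r ∈ range (n + 1), n.choose r * (bernoulli' (n - r) : ℝ) * 0 ^ r =
      bernoulli' n := by
    rw [sum_range_succ']
    simp
  have hsign : (-1 : ℝ) ^ n * (-1) ^ n = 1 := by rw [← mul_pow]; simp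
  have hswap : (-1) ^ n * ∑ s ∈ range N, Polynomial.aeval (-(γ * s)) (Polynomial.bernoulli n) =
      ∑ r ∈ range (n + 1), n.choose r * (bernoulli' (n - r) : ℝ) *
        (γ ^ r * ∑ s ∈ range N, (s : ℝ) ^ r) := by
    simp only [aeval_neg_bernoulli, ← mul_sum, ← mul_assoc, hsign, one_mul]
    rw [sum_comm]
    simp only [mul_pow, ← mul_sum, mul_assoc]
  rw [hswap, ← hzero, ← sum_sub_distrib, mul_sum]
  refine sum_congr rfl fun r _ => ?_
  have hzero_pow : γ ^ r * 0 ^ r = 0 ^ r := by rcases r with _ | r <;> simp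
  rw [hzpow, htelescope]
  linear_combination (n.choose r * (bernoulli' (n - r) : ℝ) * γ ^ (1 - n : ℤ)) * hzero_pow

/-- The alternating signs are absorbed by passing from `bernoulli` (with `B₁ = -1/2`) to
`bernoulli'` (with `B₁ = 1/2`). -/
lemma bernoulli_mul_sub_sum_bernoulli_eq (N : ℕ) {δ r : ℕ} (hr : r ≤ δ + 1) (γ : ℝ) :
    (bernoulli (δ + 1 - r) : ℝ) *
        ((N : ℝ) ^ r * (-1 : ℝ) ^ ((δ : ℤ) + 1 - (r : ℤ)) * γ ^ (-((δ : ℤ) - (r : ℤ))) -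
          ∑ m ∈ Icc 1 (r + 1), ((r + 1).choose m : ℝ) *
            ((bernoulli (r + 1 - m) : ℝ) / ((r : ℝ) + 1)) *
            ((N : ℝ) ^ m * γ ^ (-((r : ℤ) - (m : ℤ)))) * (-1 : ℝ) ^ ((δ : ℤ) - (m : ℤ))) =
      (bernoulli' (δ + 1 - r) : ℝ) *
        ((N : ℝ) ^ r * γ ^ ((r : ℤ) + 1 - (δ + 1 : ℕ)) - ∑ m ∈ range (r + 1),
          r.choose m * (bernoulli' (r - m) : ℝ) *
            ((N : ℝ) ^ (m + 1) / (m + 1) * γ ^ ((m : ℤ) + 1 - r))) := by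
  have hsign : (-1 : ℝ) ^ ((δ : ℤ) + 1 - r) = (-1) ^ (δ + 1 - r) := by
    rw [← zpow_natCast, Nat.cast_sub hr, Nat.cast_succ]
  have hsign' (m : ℕ) (hm : m ≤ r) : (-1 : ℝ) ^ ((δ : ℤ) - (m + 1 : ℕ)) =
      (-1) ^ (δ + 1 - r) * (-1) ^ (r - m) := by
    rw [← pow_add, ← zpow_natCast,
      show (δ : ℤ) - (m + 1 : ℕ) = (δ + 1 - r + (r - m) : ℕ) - 2 by omega,
      zpow_sub₀ (by norm_num)]
    norm_num
  have hterm (m : ℕ) (hm : m ∈ range (r + 1)) :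
      ((r + 1).choose (m + 1) : ℝ) * ((bernoulli (r + 1 - (m + 1)) : ℝ) / ((r : ℝ) + 1)) *
        ((N : ℝ) ^ (m + 1) * γ ^ (-((r : ℤ) - (m + 1 : ℕ)))) * (-1 : ℝ) ^ ((δ : ℤ) - (m + 1 : ℕ)) =
      (-1) ^ (δ + 1 - r) * (r.choose m * (bernoulli' (r - m) : ℝ) *
        ((N : ℝ) ^ (m + 1) / (m + 1) * γ ^ ((m : ℤ) + 1 - r))) := by
    rw [hsign' m (Nat.lt_succ_iff.1 (mem_range.1 hm)), bernoulli'_eq_bernoulli,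
      Nat.add_sub_add_right, neg_sub, Nat.cast_succ (R := ℤ)]
    push_cast
    linear_combination (bernoulli (r - m) * (-1) ^ (δ + 1 - r) * (-1) ^ (r - m) *
      (N : ℝ) ^ (m + 1) * γ ^ ((m : ℤ) + 1 - r)) * choose_succ_div r m
  rw [sum_Icc_one, sum_congr rfl hterm, ← mul_sum, hsign, neg_sub, Nat.cast_succ,
    bernoulli'_eq_bernoulli, add_sub_add_right_eq_sub]
  push_cast
  ring

theorem sum_bernoulli_mul_sub_sum_bernoulli (N δ : ℕ) (hδ : 1 ≤ δ) {γ : ℝ} (hγ : γ ≠ 0) :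
    ∑ r ∈ Icc 1 (δ + 1), ((δ + 1).choose r : ℝ) * (bernoulli (δ + 1 - r) : ℝ) *
        ((N : ℝ) ^ r * (-1 : ℝ) ^ ((δ : ℤ) + 1 - (r : ℤ)) * γ ^ (-((δ : ℤ) - (r : ℤ))) -
          ∑ m ∈ Icc 1 (r + 1), ((r + 1).choose m : ℝ) *
            ((bernoulli (r + 1 - m) : ℝ) / ((r : ℝ) + 1)) *
            ((N : ℝ) ^ m * γ ^ (-((r : ℤ) - (m : ℤ)))) * (-1 : ℝ) ^ ((δ : ℤ) - (m : ℤ))) =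
      γ * N * bernoulli (δ + 1) + (-1) ^ δ * γ⁻¹ ^ δ *
        ∑ s ∈ range N, Polynomial.aeval (-(γ * s)) (Polynomial.bernoulli (δ + 1)) := by
  have hgamma : γ ^ (1 - (δ + 1 : ℕ) : ℤ) = γ⁻¹ ^ δ := by
    rw [Nat.cast_succ, sub_add_cancel_right, zpow_neg, zpow_natCast, inv_pow]
  have hexpand := sum_bernoulli'_mul_pow_sub N (δ + 1) hγ
  simp only [mul_sub _ ((N : ℝ) ^ _), sum_sub_distrib] at hexpand
  rw [← sum_bernoulli'_mul_sum_bernoulli', ← sum_sub_distrib, sum_range_succ', hgamma,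
    pow_succ (-1 : ℝ)] at hexpand
  simp only [Nat.choose_zero_right, Nat.sub_zero, zero_add, sum_range_one, pow_zero, pow_one,
    Nat.cast_zero, Nat.cast_one, sub_zero, zpow_one, hgamma, bernoulli'_zero] at hexpand
  rw [sum_congr rfl fun r hr => (mul_assoc _ _ _).trans
    (congrArg _ (bernoulli_mul_sub_sum_bernoulli_eq N (mem_Icc.1 hr).2 γ)), sum_Icc_one,
    bernoulli_eq_bernoulli'_of_ne_one (by omega)]
  refine (sum_congr rfl fun r _ => ?_).trans ((eq_sub_of_add_eq hexpand).trans ?_) <;> ring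

lemma sum_bernoulli_two_mul (M : ℕ) (t : ℝ) :
    ∑ k ∈ (Icc 1 M).filter (fun k => 2 * k - 1 ≤ M),
        (bernoulli (2 * k) : ℝ) * t ^ (2 * k - 1) / ((2 * k * (2 * k - 1) : ℕ) : ℝ) =
      ∑ δ ∈ Icc 1 M, (bernoulli (δ + 1) : ℝ) * t ^ δ / ((δ * (δ + 1) : ℕ) : ℝ) := by
  have hodd (δ : ℕ) (hδ : δ ∈ Icc 1 M)
      (h : (bernoulli (δ + 1) : ℝ) * t ^ δ / ((δ * (δ + 1) : ℕ) : ℝ) ≠ 0) : Odd δ := by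
    contrapose! h
    have hδ' := (mem_Icc.1 hδ).1
    rw [bernoulli_eq_zero_of_odd (Nat.not_odd_iff_even.1 h).add_one (by omega)]
    simp
  rw [← sum_filter_of_ne hodd]
  refine sum_bij' (fun k _ => 2 * k - 1) (fun δ _ => (δ + 1) / 2) ?_ ?_ ?_ ?_ ?_
  · intro k hk
    simp only [mem_filter, mem_Icc] at hk ⊢
    exact ⟨by omega, k - 1, by omega⟩
  · rintro δ hδ
    simp only [mem_filter, mem_Icc] at hδ ⊢
    omega
  · intro k hk
    simp only [mem_filter, mem_Icc] at hk
    omega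
  · rintro δ hδ
    obtain ⟨-, j, rfl⟩ := mem_filter.1 hδ
    omega
  · intro k hk
    simp only [mem_filter, mem_Icc] at hk
    rw [show 2 * k - 1 + 1 = 2 * k by omega, mul_comm (2 * k)]

theorem expansion_eq_neg_sum_stirlingCoeff (N M : ℕ) {γ : ℝ} (hγ : γ ≠ 0) (t : ℝ) :
    -(γ * N) * ∑ k ∈ (Icc 1 M).filter (fun k => 2 * k - 1 ≤ M),
        (bernoulli (2 * k) : ℝ) * t ^ (2 * k - 1) / ((2 * k * (2 * k - 1) : ℕ) : ℝ) +
      ∑ δ ∈ Icc 1 M, t ^ δ / ((δ * (δ + 1) : ℕ) : ℝ) *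
        ∑ r ∈ Icc 1 (δ + 1), ((δ + 1).choose r : ℝ) * (bernoulli (δ + 1 - r) : ℝ) *
          ((N : ℝ) ^ r * (-1 : ℝ) ^ ((δ : ℤ) + 1 - (r : ℤ)) * γ ^ (-((δ : ℤ) - (r : ℤ))) -
            ∑ m ∈ Icc 1 (r + 1), ((r + 1).choose m : ℝ) *
              ((bernoulli (r + 1 - m) : ℝ) / ((r : ℝ) + 1)) *
              ((N : ℝ) ^ m * γ ^ (-((r : ℤ) - (m : ℤ)))) * (-1 : ℝ) ^ ((δ : ℤ) - (m : ℤ))) =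
      -∑ s ∈ range N, ∑ k ∈ range M, stirlingCoeff k (-(γ * s)) * (γ / t)⁻¹ ^ (k + 1) := by
  rw [sum_bernoulli_two_mul, mul_sum, ← sum_add_distrib, sum_comm, ← sum_neg_distrib, sum_Icc_one]
  refine sum_congr rfl fun k _ => ?_
  rw [sum_bernoulli_mul_sub_sum_bernoulli N (k + 1) (by omega) hγ, inv_div, div_pow, ← sum_mul]
  simp only [stirlingCoeff, ← sum_div, ← mul_sum]
  rw [inv_pow, pow_succ (-1 : ℝ)]
  push_cast
  field_simp
  ring

end BernoulliSums

section HankelWeight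

/-- The point `1 - i x` of the vertical line `Re y = 1`. -/
noncomputable def oneSubI (x : ℝ) : ℂ := 1 - Complex.I * x

@[simp]
lemma oneSubI_re (x : ℝ) : (oneSubI x).re = 1 := by simp [oneSubI]

lemma oneSubI_mem_slitPlane (x : ℝ) : oneSubI x ∈ Complex.slitPlane := Or.inl (by simp)

lemma oneSubI_ne_zero (x : ℝ) : oneSubI x ≠ 0 :=
  Complex.slitPlane_ne_zero (oneSubI_mem_slitPlane x)

lemma norm_oneSubI (x : ℝ) : ‖oneSubI x‖ = (1 + x ^ 2) ^ (1 / 2 : ℝ) := by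
  rw [Complex.norm_eq_sqrt_sq_add_sq, Real.sqrt_eq_rpow]
  simp [oneSubI]

lemma hasDerivAt_oneSubI (x : ℝ) : HasDerivAt oneSubI (-Complex.I) x := by
  convert! ((hasDerivAt_id x).ofReal_comp.const_mul Complex.I).const_sub 1 using 1
  simp

lemma continuous_oneSubI : Continuous oneSubI := by
  unfold oneSubI; fun_prop

/-- The integrand `e^{b y} y^{-α}` of Hankel's integral for `1 / Γ(α)`, on the line
`y = 1 - i x`. -/
noncomputable def hankelWeight (b α x : ℝ) : ℂ :=
  Complex.exp (b * oneSubI x) * oneSubI x ^ ((-α : ℝ) : ℂ)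

lemma continuous_hankelWeight (b α : ℝ) : Continuous (hankelWeight b α) :=
  (by have := continuous_oneSubI; fun_prop : Continuous fun x => Complex.exp (b * oneSubI x)).mul
    (continuous_oneSubI.cpow continuous_const oneSubI_mem_slitPlane)

lemma norm_hankelWeight (b α x : ℝ) :
    ‖hankelWeight b α x‖ = Real.exp b * (1 + x ^ 2) ^ (-α / 2) := by
  rw [hankelWeight, norm_mul, Complex.norm_exp, Complex.re_ofReal_mul, oneSubI_re, mul_one,
    Complex.norm_cpow_real, norm_oneSubI, ← Real.rpow_mul (by positivity)]
  ring_nf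

lemma oneSubI_mul_hankelWeight (b α x : ℝ) :
    oneSubI x * hankelWeight b α x = hankelWeight b (α - 1) x := by
  rw [hankelWeight, hankelWeight, neg_sub, sub_eq_neg_add, Complex.ofReal_add,
    Complex.cpow_add _ _ (oneSubI_ne_zero x), Complex.ofReal_one, Complex.cpow_one]
  ring

lemma hasDerivAt_hankelWeight (b α x : ℝ) :
    HasDerivAt (hankelWeight b α)
      (-Complex.I * (b * hankelWeight b α x - α * hankelWeight b (α + 1) x)) x := by
  have hexp := ((hasDerivAt_oneSubI x).const_mul (b : ℂ)).cexp
  have hpow : HasDerivAt (fun x => oneSubI x ^ ((-α : ℝ) : ℂ))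
      (((-α : ℝ) : ℂ) * oneSubI x ^ (((-α : ℝ) : ℂ) - 1) * -Complex.I) x :=
    (Complex.hasStrictDerivAt_cpow_const (oneSubI_mem_slitPlane x)).hasDerivAt.comp x
      (hasDerivAt_oneSubI x)
  convert! hexp.mul hpow using 1
  simp only [hankelWeight]
  push_cast
  rw [neg_add']
  ring

lemma hasDerivAt_hankelWeight_left (b α x : ℝ) :
    HasDerivAt (fun b => hankelWeight b α x) (hankelWeight b (α - 1) x) b := by
  rw [← oneSubI_mul_hankelWeight]
  have h := (((hasDerivAt_id b).ofReal_comp.mul_const (oneSubI x)).cexp).mul_const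
    (oneSubI x ^ ((-α : ℝ) : ℂ))
  convert! h using 1
  simp only [hankelWeight, id, Complex.ofReal_one]
  ring

lemma integrable_rpow_mul_hankelWeight {s α : ℝ} (h : 2 * s + 1 < α) (b : ℝ) :
    Integrable fun x : ℝ => (((1 + x ^ 2) ^ s : ℝ) : ℂ) * hankelWeight b α x := by
  have hint : Integrable fun x : ℝ => Real.exp b * (1 + ‖x‖ ^ 2) ^ (-(α - 2 * s) / 2) :=
    (integrable_rpow_neg_one_add_norm_sq (by simp; linarith)).const_mul _
  have hcont : Continuous fun x : ℝ => (((1 + x ^ 2) ^ s : ℝ) : ℂ) * hankelWeight b α x :=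
    (Complex.continuous_ofReal.comp (Continuous.rpow_const (by fun_prop) fun x =>
      Or.inl (by positivity))).mul (continuous_hankelWeight b α)
  refine hint.mono' hcont.aestronglyMeasurable (.of_forall fun x => le_of_eq ?_)
  rw [norm_mul, norm_hankelWeight, Complex.norm_real, Real.norm_of_nonneg (by positivity),
    mul_left_comm, ← Real.rpow_add (by positivity), Real.norm_eq_abs, sq_abs]
  ring_nf

end HankelWeight

section VandermondeWeight

variable {ι : Type*} [Fintype ι] [DecidableEq ι] {γ ε : ℝ}

/-- The Vandermonde weight `∏_{i < j} |l j - l i| ^ (2 γ)`, with each squared difference increased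
by `ε` so that the weight is smooth when `0 < ε`. Every unordered pair occurs twice in the product,
whence the exponent `γ / 2`. -/
noncomputable def vandermondeWeight (γ ε : ℝ) (l : ι → ℝ) : ℝ :=
  ∏ i, ∏ j ∈ {i}ᶜ, ((l i - l j) ^ 2 + ε) ^ (γ / 2)

/-- The regularisation `d / (d² + ε)` of `1 / d`. -/
noncomputable def regInv (ε d : ℝ) : ℝ := d / (d ^ 2 + ε)

lemma regInv_neg (ε d : ℝ) : regInv ε (-d) = -regInv ε d := by
  simp [regInv, neg_div]

lemma continuous_regInv (hε : 0 < ε) : Continuous (regInv ε) :=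
  Continuous.div (by fun_prop) (by fun_prop) fun d => by positivity

lemma abs_regInv_le (hε : 0 < ε) (d : ℝ) : |regInv ε d| ≤ 1 + ε⁻¹ := by
  have hd : |d| ≤ d ^ 2 + 1 := by
    rw [← sq_abs d]; nlinarith [sq_nonneg (|d| - 1), abs_nonneg d]
  rw [regInv, abs_div, abs_of_pos (show 0 < d ^ 2 + ε by positivity), div_le_iff₀ (by positivity)]
  calc |d| ≤ d ^ 2 + 1 := hd
    _ ≤ d ^ 2 + 1 + (ε + ε⁻¹ * d ^ 2) := le_add_of_nonneg_right (by positivity)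
    _ = (1 + ε⁻¹) * (d ^ 2 + ε) := by field_simp; ring

lemma vandermondeWeight_nonneg (hε : 0 ≤ ε) (l : ι → ℝ) : 0 ≤ vandermondeWeight γ ε l :=
  prod_nonneg fun _ _ => prod_nonneg fun _ _ => by positivity

lemma vandermondeWeight_pos {l : ι → ℝ} (hl : Function.Injective l) :
    0 < vandermondeWeight γ 0 l := by
  refine prod_pos fun i _ => prod_pos fun j hj => Real.rpow_pos_of_pos ?_ _
  have : l i - l j ≠ 0 := sub_ne_zero.2 fun h => by simp [hl h] at hj
  positivity

lemma vandermondeWeight_zero_eq_zero (hγ : γ ≠ 0) {l : ι → ℝ} {j k : ι} (hjk : j ≠ k)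
    (h : l j = l k) : vandermondeWeight γ 0 l = 0 :=
  prod_eq_zero (mem_univ j) <| prod_eq_zero (i := k) (by simpa using hjk.symm) <| by
    simp [h, Real.zero_rpow (show γ / 2 ≠ 0 by positivity)]

lemma vandermondeWeight_le_of_le (hγ : 0 ≤ γ) {ε' : ℝ} (hε : 0 ≤ ε) (h : ε ≤ ε') (l : ι → ℝ) :
    vandermondeWeight γ ε l ≤ vandermondeWeight γ ε' l := by
  unfold vandermondeWeight
  gcongr

lemma vandermondeWeight_comp_perm (γ ε : ℝ) (l : ι → ℝ) (σ : Equiv.Perm ι) :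
    vandermondeWeight γ ε (l ∘ σ) = vandermondeWeight γ ε l := by
  unfold vandermondeWeight
  rw [← Equiv.prod_comp σ fun i => ∏ j ∈ {i}ᶜ, ((l i - l j) ^ 2 + ε) ^ (γ / 2)]
  exact prod_congr rfl fun i _ => prod_equiv σ (by simp) (by simp)

lemma continuous_vandermondeWeight {X : Type*} [TopologicalSpace X] (hγ : 0 ≤ γ)
    {e : X → ℝ} {l : X → ι → ℝ} (he : Continuous e) (hl : Continuous l) :
    Continuous fun x => vandermondeWeight γ (e x) (l x) :=
  continuous_finsetProd _ fun i _ => continuous_finsetProd _ fun j _ =>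
    Continuous.rpow_const (by fun_prop) fun _ => Or.inr (by positivity)

lemma vandermondeWeight_smul {c : ℝ} (hc : 0 < c) (l : ι → ℝ) :
    vandermondeWeight γ 0 (c • l) =
      c ^ (γ * (Fintype.card ι * (Fintype.card ι - 1))) * vandermondeWeight γ 0 l := by
  have hfactor : ∀ i j, ((c • l) i - (c • l) j) ^ 2 + 0 = c ^ 2 * ((l i - l j) ^ 2 + 0) :=
    fun i j => by simp only [Pi.smul_apply, smul_eq_mul]; ring
  unfold vandermondeWeight
  simp only [hfactor, Real.mul_rpow (sq_nonneg c) (add_nonneg (sq_nonneg _) le_rfl),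
    prod_mul_distrib, prod_const, card_compl, card_singleton, card_univ]
  congr 1
  rcases isEmpty_or_nonempty ι with h | h
  · simp
  rw [← Real.rpow_natCast c 2, ← Real.rpow_mul hc.le, ← Real.rpow_mul_natCast hc.le,
    ← Real.rpow_mul_natCast hc.le, Nat.cast_pred Fintype.card_pos]
  push_cast
  ring_nf

lemma prod_prod_compl_mul_comm (f : ι → ℝ) :
    ∏ i, ∏ j ∈ {i}ᶜ, f i * f j = ∏ i, f i ^ (2 * (Fintype.card ι - 1)) := by
  have hswap : ∏ i, ∏ j ∈ {i}ᶜ, f j = ∏ j, ∏ _ ∈ {j}ᶜ, f j :=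
    prod_comm' fun i j => by simp [eq_comm]
  simp only [prod_mul_distrib, hswap, prod_const, card_compl, card_singleton]
  rw [← prod_mul_distrib]
  exact prod_congr rfl fun i _ => by ring

lemma exists_vandermondeWeight_le (hγ : 0 ≤ γ) (hε : 0 ≤ ε) :
    ∃ C, ∀ l : ι → ℝ, vandermondeWeight γ ε l ≤
      C * ∏ j, (1 + l j ^ 2) ^ (γ * (Fintype.card ι - 1)) := by
  refine ⟨∏ i : ι, ∏ j ∈ {i}ᶜ, (2 * (1 + ε)) ^ (γ / 2), fun l => ?_⟩
  have hpair : ∀ i j, ((l i - l j) ^ 2 + ε) ^ (γ / 2) ≤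
      (2 * (1 + ε)) ^ (γ / 2) * ((1 + l i ^ 2) ^ (γ / 2) * (1 + l j ^ 2) ^ (γ / 2)) := fun i j => by
    rw [← Real.mul_rpow (by positivity) (by positivity),
      ← Real.mul_rpow (by positivity) (by positivity)]
    gcongr
    nlinarith [sq_nonneg (l i + l j), sq_nonneg (l i * l j),
      mul_nonneg hε (by positivity : 0 ≤ l i ^ 2 + l j ^ 2 + l i ^ 2 * l j ^ 2)]
  calc vandermondeWeight γ ε l
      ≤ ∏ i, ∏ j ∈ {i}ᶜ,
          (2 * (1 + ε)) ^ (γ / 2) * ((1 + l i ^ 2) ^ (γ / 2) * (1 + l j ^ 2) ^ (γ / 2)) :=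
        prod_le_prod (fun i _ => prod_nonneg fun j _ => by positivity) fun i _ =>
          prod_le_prod (fun j _ => by positivity) fun j _ => hpair i j
    _ = (∏ i : ι, ∏ j ∈ {i}ᶜ, (2 * (1 + ε)) ^ (γ / 2)) *
          ∏ i, ∏ j ∈ {i}ᶜ, (1 + l i ^ 2) ^ (γ / 2) * (1 + l j ^ 2) ^ (γ / 2) := by
        simp only [← prod_mul_distrib]
    _ = _ := by
        rw [prod_prod_compl_mul_comm fun i => (1 + l i ^ 2) ^ (γ / 2)]
        refine congrArg _ (prod_congr rfl fun i _ => ?_)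
        have : Nonempty ι := ⟨i⟩
        rw [← Real.rpow_mul_natCast (by positivity), Nat.cast_mul, Nat.cast_pred Fintype.card_pos]
        push_cast
        ring_nf

lemma vandermondeWeight_eq_exp (hε : 0 < ε) (l : ι → ℝ) :
    vandermondeWeight γ ε l =
      Real.exp (γ / 2 * ∑ i, ∑ j ∈ {i}ᶜ, Real.log ((l i - l j) ^ 2 + ε)) := by
  simp only [vandermondeWeight, mul_sum, Real.exp_sum]
  refine prod_congr rfl fun i _ => prod_congr rfl fun j _ => ?_
  rw [Real.rpow_def_of_pos (by positivity), mul_comm]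

lemma sum_sum_regInv_mul_single (ε : ℝ) (l : ι → ℝ) (j : ι) :
    ∑ i, ∑ k, regInv ε (l i - l k) * ((Pi.single j 1 : ι → ℝ) i - (Pi.single j 1 : ι → ℝ) k) =
      2 * ∑ k, regInv ε (l j - l k) := by
  have hodd : ∀ i, regInv ε (l i - l j) = -regInv ε (l j - l i) := fun i => by
    rw [← regInv_neg, neg_sub]
  simp only [mul_sub, sum_sub_distrib, Pi.single_apply, mul_ite, mul_one, mul_zero, sum_ite_eq',
    mem_univ, if_true, sum_ite_irrel, sum_const_zero, hodd, sum_neg_distrib]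
  ring

lemma hasLineDerivAt_vandermondeWeight (hε : 0 < ε) (l : ι → ℝ) (j : ι) :
    HasLineDerivAt ℝ (vandermondeWeight γ ε)
      (vandermondeWeight γ ε l * (2 * γ * ∑ k, regInv ε (l j - l k))) l (Pi.single j 1) := by
  set v : ι → ℝ := Pi.single j 1
  have hcoord : ∀ k, HasDerivAt (fun τ : ℝ => (l + τ • v) k) (v k) 0 := fun k => by
    simpa using ((hasDerivAt_id (0 : ℝ)).mul_const (v k)).const_add (l k)
  have hlog : HasDerivAt
      (fun τ : ℝ => ∑ i, ∑ k ∈ {i}ᶜ, Real.log (((l + τ • v) i - (l + τ • v) k) ^ 2 + ε))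
      (∑ i, ∑ k ∈ {i}ᶜ, 2 * (regInv ε (l i - l k) * (v i - v k))) 0 := by
    refine .fun_sum fun i _ => .fun_sum fun k _ => ?_
    have hsq := (((hcoord i).sub (hcoord k)).pow 2).add_const ε
    convert! hsq.log (by simp only [Pi.pow_apply]; positivity) using 1
    simp only [regInv, Pi.pow_apply, Pi.sub_apply, zero_smul, add_zero]
    ring
  have hdiag : ∀ i, ∑ k ∈ {i}ᶜ, 2 * (regInv ε (l i - l k) * (v i - v k)) =
      ∑ k, 2 * (regInv ε (l i - l k) * (v i - v k)) := fun i =>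
    sum_subset (subset_univ _) fun k _ hk => by simp_all
  simp only [hdiag, ← mul_sum, v, sum_sum_regInv_mul_single] at hlog
  unfold HasLineDerivAt
  simp only [vandermondeWeight_eq_exp hε]
  convert! (hlog.const_mul (γ / 2)).exp using 1
  simp only [zero_smul, add_zero]
  ring

end VandermondeWeight

section LoweredExponents

variable {ι : Type*} [DecidableEq ι]

/-- The exponents at the stage of Aomoto's recursion where those in `S` have been lowered from
`a + 1` to `a`. -/
def loweredExponents (a : ℝ) (S : Finset ι) : ι → ℝ := S.piecewise (fun _ => a) fun _ => a + 1

lemma loweredExponents_of_mem {S : Finset ι} {i : ι} (h : i ∈ S) (a : ℝ) :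
    loweredExponents a S i = a := S.piecewise_eq_of_mem _ _ h

lemma loweredExponents_of_notMem {S : Finset ι} {i : ι} (h : i ∉ S) (a : ℝ) :
    loweredExponents a S i = a + 1 := S.piecewise_eq_of_notMem _ _ h

lemma loweredExponents_insert (a : ℝ) (S : Finset ι) (j : ι) :
    loweredExponents a (insert j S) = Function.update (loweredExponents a S) j a :=
  S.piecewise_insert _ _ j

lemma le_loweredExponents (a : ℝ) (S : Finset ι) (i : ι) : a ≤ loweredExponents a S i := by
  by_cases h : i ∈ S
  · rw [loweredExponents_of_mem h]
  · rw [loweredExponents_of_notMem h]; exact (lt_add_one a).le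

end LoweredExponents

section MehtaIntegral

variable {ι : Type*} [Fintype ι] {γ ε b : ℝ}

lemma integral_comp_perm {E : Type*} [NormedAddCommGroup E] [NormedSpace ℝ E]
    (h : (ι → ℝ) → E) (σ : Equiv.Perm ι) : ∫ l : ι → ℝ, h (l ∘ σ) = ∫ l, h l := by
  rw [← (volume_measurePreserving_piCongrLeft (fun _ : ι => ℝ) σ.symm).integral_comp' h]
  congr! 3 with l
  funext i
  simpa using (MeasurableEquiv.piCongrLeft_apply_apply (β := fun _ : ι => ℝ) σ.symm l (σ i)).symm

lemma integral_eq_zero_of_hasLineDerivAt {E : Type*} [NormedAddCommGroup E] [NormedSpace ℝ E]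
    [MeasurableSpace E] [BorelSpace E] [FiniteDimensional ℝ E] {μ : Measure E}
    [μ.IsAddHaarMeasure] {g g' : E → ℂ} {v : E} (hg : Integrable g μ) (hg' : Integrable g' μ)
    (h : ∀ x, HasLineDerivAt ℝ g (g' x) x v) : ∫ x, g' x ∂μ = 0 := by
  simpa using integral_bilinear_hasLineDerivAt_right_eq_neg_left_of_integrable (μ := μ)
    (f := fun _ => (1 : ℂ)) (f' := fun _ => 0) (B := ContinuousLinearMap.mul ℝ ℂ)
    (by simp) (by simpa using hg') (by simpa using hg)
    (fun _ _ => hasDerivAt_const (0 : ℝ) (1 : ℂ)) (fun x _ => h x)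

lemma integrable_regInv_mul (hε : 0 < ε) {F : (ι → ℝ) → ℂ} (hF : Integrable F) (j k : ι) :
    Integrable fun l : ι → ℝ => (regInv ε (l j - l k) : ℂ) * F l :=
  hF.bdd_mul (c := 1 + ε⁻¹)
    (Complex.continuous_ofReal.comp
      ((continuous_regInv hε).comp (by fun_prop))).aestronglyMeasurable
    (.of_forall fun l => by simpa using abs_regInv_le hε (l j - l k))

variable [DecidableEq ι]

lemma integrable_vandermondeWeight_mul_prod {𝕜 : Type*} [RCLike 𝕜] (hγ : 0 ≤ γ) (hε : 0 ≤ ε)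
    {w : ι → ℝ → 𝕜} (hw : ∀ j, Integrable fun x : ℝ =>
      (((1 + x ^ 2) ^ (γ * (Fintype.card ι - 1)) : ℝ) : 𝕜) * w j x) :
    Integrable fun l : ι → ℝ => (vandermondeWeight γ ε l : 𝕜) * ∏ j, w j (l j) := by
  obtain ⟨C, hC⟩ := exists_vandermondeWeight_le (ι := ι) hγ hε
  set P : (ι → ℝ) → ℝ := fun l => ∏ j, (1 + l j ^ 2) ^ (γ * (Fintype.card ι - 1))
  have hP : ∀ l, 0 < P l := fun l => prod_pos fun j _ => by positivity
  have hPcont : Continuous P := continuous_finsetProd _ fun j _ =>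
    Continuous.rpow_const (by fun_prop) fun l => Or.inl (by positivity)
  have hcont : Continuous fun l => vandermondeWeight γ ε l / P l :=
    (continuous_vandermondeWeight hγ continuous_const continuous_id).div hPcont
      fun l => (hP l).ne'
  refine ((Integrable.fintype_prod hw).bdd_mul (c := C)
    (RCLike.continuous_ofReal.comp hcont).aestronglyMeasurable
    (.of_forall fun l => ?_)).congr (.of_forall fun l => ?_)
  · rw [Function.comp_apply, RCLike.norm_ofReal, abs_of_nonneg
      (div_nonneg (vandermondeWeight_nonneg hε l) (hP l).le), div_le_iff₀ (hP l)]
    exact hC l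
  · have hPl : ((P l : ℝ) : 𝕜) ≠ 0 := RCLike.ofReal_ne_zero.2 (hP l).ne'
    simp only [Function.comp_apply, prod_mul_distrib, ← RCLike.ofReal_prod]
    change ((vandermondeWeight γ ε l / P l : ℝ) : 𝕜) * ((P l : 𝕜) * _) = _
    rw [RCLike.ofReal_div]
    field_simp

/-- The integrand of the Mehta-type integral in which the `j`-th variable carries Hankel's weight
with exponent `α j`. -/
noncomputable def mehtaIntegrand (γ ε b : ℝ) (α l : ι → ℝ) : ℂ :=
  vandermondeWeight γ ε l * ∏ j, hankelWeight b (α j) (l j)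

/-- The Mehta-type integral with Hankel weights; separate exponents `α j` are what Aomoto's
recursion on the number of lowered exponents needs. -/
noncomputable def mehtaIntegral (γ ε b : ℝ) (α : ι → ℝ) : ℂ :=
  ∫ l, mehtaIntegrand γ ε b α l

lemma continuous_mehtaIntegrand {X : Type*} [TopologicalSpace X] (hγ : 0 ≤ γ) {e : X → ℝ}
    {l : X → ι → ℝ} (b : ℝ) (α : ι → ℝ) (he : Continuous e) (hl : Continuous l) :
    Continuous fun x => mehtaIntegrand γ (e x) b α (l x) :=
  (Complex.continuous_ofReal.comp (continuous_vandermondeWeight hγ he hl)).mul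
    (continuous_finsetProd _ fun j _ => (continuous_hankelWeight b (α j)).comp (by fun_prop))

lemma integrable_mehtaIntegrand (hγ : 0 ≤ γ) (hε : 0 ≤ ε) {α : ι → ℝ}
    (hα : ∀ j, 2 * γ * (Fintype.card ι - 1) + 1 < α j) (b : ℝ) :
    Integrable (mehtaIntegrand γ ε b α) :=
  integrable_vandermondeWeight_mul_prod hγ hε fun j =>
    integrable_rpow_mul_hankelWeight (by linarith [hα j]) b

lemma norm_mehtaIntegrand_le (hγ : 0 ≤ γ) {ε' b' : ℝ} (hε : 0 ≤ ε) (hε' : ε ≤ ε') (hb : b ≤ b')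
    (α l : ι → ℝ) : ‖mehtaIntegrand γ ε b α l‖ ≤ ‖mehtaIntegrand γ ε' b' α l‖ := by
  simp only [mehtaIntegrand, norm_mul, norm_prod, norm_hankelWeight, Complex.norm_real,
    Real.norm_of_nonneg (vandermondeWeight_nonneg hε l),
    Real.norm_of_nonneg (vandermondeWeight_nonneg (hε.trans hε') l)]
  gcongr
  · exact vandermondeWeight_nonneg (hε.trans hε') l
  · exact vandermondeWeight_le_of_le hγ hε hε' l

lemma mehtaIntegrand_comp_perm (γ ε b : ℝ) (α l : ι → ℝ) (σ : Equiv.Perm ι) :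
    mehtaIntegrand γ ε b (α ∘ σ) (l ∘ σ) = mehtaIntegrand γ ε b α l := by
  simp only [mehtaIntegrand, vandermondeWeight_comp_perm, Function.comp_apply]
  rw [Equiv.prod_comp σ fun j => hankelWeight b (α j) (l j)]

lemma mehtaIntegrand_update (γ ε b : ℝ) (α l : ι → ℝ) (j : ι) (c : ℝ) :
    mehtaIntegrand γ ε b (Function.update α j c) l = vandermondeWeight γ ε l *
      (hankelWeight b c (l j) * ∏ i ∈ {j}ᶜ, hankelWeight b (α i) (l i)) := by
  rw [mehtaIntegrand, Fintype.prod_eq_mul_prod_compl j, Function.update_self]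
  congr 2
  refine prod_congr rfl fun i hi => ?_
  rw [Function.update_of_ne (by simpa using hi)]

lemma mehtaIntegrand_eq_mul_prod_compl (γ ε b : ℝ) (α l : ι → ℝ) (j : ι) :
    mehtaIntegrand γ ε b α l = vandermondeWeight γ ε l *
      (hankelWeight b (α j) (l j) * ∏ i ∈ {j}ᶜ, hankelWeight b (α i) (l i)) := by
  rw [mehtaIntegrand, Fintype.prod_eq_mul_prod_compl j]

lemma oneSubI_mul_mehtaIntegrand (γ ε b : ℝ) (α l : ι → ℝ) (j : ι) :
    oneSubI (l j) * mehtaIntegrand γ ε b α l =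
      mehtaIntegrand γ ε b (Function.update α j (α j - 1)) l := by
  rw [mehtaIntegrand_update, ← oneSubI_mul_hankelWeight,
    mehtaIntegrand_eq_mul_prod_compl _ _ _ _ _ j]
  ring

lemma hasLineDerivAt_mehtaIntegrand (hε : 0 < ε) (b : ℝ) (α l : ι → ℝ) (j : ι) :
    HasLineDerivAt ℝ (mehtaIntegrand γ ε b α)
      (2 * γ * ∑ k, regInv ε (l j - l k) * mehtaIntegrand γ ε b α l -
        Complex.I * (b * mehtaIntegrand γ ε b α l -
          α j * mehtaIntegrand γ ε b (Function.update α j (α j + 1)) l)) l (Pi.single j 1) := by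
  set v : ι → ℝ := Pi.single j 1
  set R : ℂ := ∏ i ∈ {j}ᶜ, hankelWeight b (α i) (l i) with hRdef
  have hline : ∀ τ : ℝ, mehtaIntegrand γ ε b α (l + τ • v) =
      vandermondeWeight γ ε (l + τ • v) * (hankelWeight b (α j) (l j + τ) * R) := fun τ => by
    rw [mehtaIntegrand_eq_mul_prod_compl _ _ _ _ _ j]
    congr 2
    · simp [v]
    · refine prod_congr rfl fun i hi => ?_
      have : i ≠ j := by simpa using hi
      simp [v, this]
  have hw : HasDerivAt (fun τ => hankelWeight b (α j) (l j + τ)) (-Complex.I *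
      (b * hankelWeight b (α j) (l j) - α j * hankelWeight b (α j + 1) (l j))) 0 :=
    HasDerivAt.comp_const_add (l j) 0 (by simpa using hasDerivAt_hankelWeight b (α j) (l j))
  have hV := (hasLineDerivAt_vandermondeWeight (γ := γ) hε l j).ofReal_comp
  unfold HasLineDerivAt
  simp only [hline]
  convert! hV.mul (hw.mul_const R) using 1
  rw [mehtaIntegrand_update, mehtaIntegrand_eq_mul_prod_compl _ _ _ _ _ j, ← hRdef, ← sum_mul,
    zero_smul, add_zero, add_zero]
  push_cast
  ring

lemma mehtaIntegral_integral_by_parts (hγ : 0 ≤ γ) (hε : 0 < ε) {α : ι → ℝ}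
    (hα : ∀ j, 2 * γ * (Fintype.card ι - 1) + 1 < α j) (b : ℝ) (j : ι) :
    Complex.I * (b * mehtaIntegral γ ε b α -
        α j * mehtaIntegral γ ε b (Function.update α j (α j + 1))) =
      2 * γ * ∑ k, ∫ l, regInv ε (l j - l k) * mehtaIntegrand γ ε b α l := by
  have hα' : ∀ i, 2 * γ * (Fintype.card ι - 1) + 1 < Function.update α j (α j + 1) i := fun i => by
    obtain rfl | hi := eq_or_ne i j
    · simpa using (hα i).trans (lt_add_one _)
    · simpa [hi] using hα i
  have hint := integrable_mehtaIntegrand hγ hε.le hα b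
  have hint' := integrable_mehtaIntegrand hγ hε.le hα' b
  have hκ := fun k => integrable_regInv_mul hε hint j k
  have hsum := (integrable_finsetSum univ fun k _ => hκ k).const_mul (2 * γ : ℂ)
  have hdiff : Integrable fun l => Complex.I * (b * mehtaIntegrand γ ε b α l -
      α j * mehtaIntegrand γ ε b (Function.update α j (α j + 1)) l) :=
    ((hint.const_mul _).sub (hint'.const_mul _)).const_mul _
  have h := integral_eq_zero_of_hasLineDerivAt hint (hsum.sub hdiff)
    fun l => hasLineDerivAt_mehtaIntegrand hε b α l j
  rw [integral_sub' hsum hdiff, integral_const_mul, integral_const_mul,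
    integral_sub (hint.const_mul _) (hint'.const_mul _), integral_const_mul, integral_const_mul,
    integral_finsetSum _ fun k _ => hκ k, sub_eq_zero] at h
  exact h.symm

lemma integral_mul_mehtaIntegrand_comp_swap {α : ι → ℝ} {j k : ι} (h : α j = α k) (γ ε b : ℝ)
    (g : (ι → ℝ) → ℂ) :
    ∫ l, g (l ∘ Equiv.swap j k) * mehtaIntegrand γ ε b α l =
      ∫ l, g l * mehtaIntegrand γ ε b α l := by
  have hα : α ∘ Equiv.swap j k = α := by
    funext i
    rw [Function.comp_apply, Equiv.swap_apply_def]
    split_ifs with h₁ h₂ <;> simp [*]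
  rw [← integral_comp_perm (fun l => g l * mehtaIntegrand γ ε b α l) (Equiv.swap j k)]
  congr! 3 with l
  rw [← mehtaIntegrand_comp_perm γ ε b α l (Equiv.swap j k), hα]

lemma integral_regInv_mul_mehtaIntegrand_eq_zero {α : ι → ℝ} {j k : ι} (h : α j = α k)
    (γ ε b : ℝ) : ∫ l, regInv ε (l j - l k) * mehtaIntegrand γ ε b α l = 0 := by
  have hodd : ∀ l : ι → ℝ, regInv ε (l k - l j) = -regInv ε (l j - l k) := fun l => by
    rw [← regInv_neg, neg_sub]
  have hswap := integral_mul_mehtaIntegrand_comp_swap h γ ε b fun l => regInv ε (l j - l k)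
  simp only [Function.comp_apply, Equiv.swap_apply_left, Equiv.swap_apply_right,
    hodd, Complex.ofReal_neg, neg_mul, integral_neg] at hswap
  exact self_eq_neg.1 hswap.symm

/-- Exchanging the `j`-th and `k`-th variables changes the sign of `regInv` and turns
`1 - i l j` into `1 - i l k`; in the difference of the two integrals the factor
`-i (l j - l k)` cancels the singularity of `regInv` as `ε → 0`. -/
lemma integral_regInv_mul_mehtaIntegrand_update (hγ : 0 ≤ γ) (hε : 0 < ε) {α : ι → ℝ} {j k : ι}
    (hα : ∀ i, 2 * γ * (Fintype.card ι - 1) + 1 < α i)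
    (hj : 2 * γ * (Fintype.card ι - 1) + 1 < α j - 1) (h : α j = α k) (b : ℝ) :
    ∫ l, regInv ε (l j - l k) * mehtaIntegrand γ ε b (Function.update α j (α j - 1)) l =
      -Complex.I / 2 *
        ∫ l, ((l j - l k) * regInv ε (l j - l k) : ℝ) * mehtaIntegrand γ ε b α l := by
  have hint : ∀ i, α j = α i → Integrable fun l : ι → ℝ =>
      (regInv ε (l j - l k) * oneSubI (l i)) * mehtaIntegrand γ ε b α l := fun i hi => by
    simp only [mul_assoc, oneSubI_mul_mehtaIntegrand]
    refine integrable_regInv_mul hε (integrable_mehtaIntegrand hγ hε.le (fun m => ?_) b) j k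
    obtain rfl | hm := eq_or_ne m i
    · simpa [← hi] using hj
    · simpa [hm] using hα m
  have hodd : ∀ l : ι → ℝ, regInv ε (l k - l j) = -regInv ε (l j - l k) := fun l => by
    rw [← regInv_neg, neg_sub]
  have hswap := integral_mul_mehtaIntegrand_comp_swap h γ ε b
    fun l => regInv ε (l j - l k) * oneSubI (l j)
  simp only [Function.comp_apply, Equiv.swap_apply_left, Equiv.swap_apply_right,
    hodd, Complex.ofReal_neg, neg_mul, integral_neg] at hswap
  have hdiff : ∫ l, (-Complex.I * ((l j - l k) * regInv ε (l j - l k) : ℝ)) *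
      mehtaIntegrand γ ε b α l =
      (∫ l, (regInv ε (l j - l k) * oneSubI (l j)) * mehtaIntegrand γ ε b α l) -
        ∫ l, (regInv ε (l j - l k) * oneSubI (l k)) * mehtaIntegrand γ ε b α l := by
    rw [← integral_sub (hint j rfl) (hint k h)]
    congr! 2
    simp only [oneSubI]
    push_cast
    ring
  simp only [mul_assoc, integral_const_mul, oneSubI_mul_mehtaIntegrand] at hdiff hswap ⊢
  linear_combination -(1 / 2) * hdiff - (1 / 2) * hswap

lemma tendsto_integral_mul_mehtaIntegrand (hγ : 0 ≤ γ) {α : ι → ℝ}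
    (hα : ∀ j, 2 * γ * (Fintype.card ι - 1) + 1 < α j) (b : ℝ) {p : ℝ → (ι → ℝ) → ℝ}
    (hp : ∀ ε > 0, Continuous (p ε)) (hp1 : ∀ ε > 0, ∀ l, |p ε l| ≤ 1)
    (h : ∀ l, Tendsto (fun ε => p ε l * mehtaIntegrand γ ε b α l) (𝓝[>] 0)
      (𝓝 (mehtaIntegrand γ 0 b α l))) :
    Tendsto (fun ε => ∫ l, p ε l * mehtaIntegrand γ ε b α l) (𝓝[>] 0)
      (𝓝 (mehtaIntegral γ 0 b α)) := by
  refine tendsto_integral_filter_of_dominated_convergence (fun l => ‖mehtaIntegrand γ 1 b α l‖)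
    ?_ ?_ (integrable_mehtaIntegrand hγ zero_le_one hα b).norm (.of_forall h)
  · filter_upwards [self_mem_nhdsWithin] with ε hε
    exact ((Complex.continuous_ofReal.comp (hp ε hε)).mul
      (continuous_mehtaIntegrand hγ b α continuous_const continuous_id)).aestronglyMeasurable
  · filter_upwards [Ioo_mem_nhdsGT one_pos] with ε hε
    refine .of_forall fun l => ?_
    rw [norm_mul, Complex.norm_real]
    exact (mul_le_of_le_one_left (norm_nonneg _) (hp1 ε hε.1 l)).trans
      (norm_mehtaIntegrand_le hγ hε.1.le hε.2.le le_rfl α l)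

lemma tendsto_mehtaIntegrand (hγ : 0 ≤ γ) (b : ℝ) (α l : ι → ℝ) :
    Tendsto (fun ε => mehtaIntegrand γ ε b α l) (𝓝[>] 0) (𝓝 (mehtaIntegrand γ 0 b α l)) :=
  ((continuous_mehtaIntegrand hγ b α continuous_id continuous_const).tendsto 0).mono_left
    nhdsWithin_le_nhds

lemma tendsto_mehtaIntegral (hγ : 0 ≤ γ) {α : ι → ℝ}
    (hα : ∀ j, 2 * γ * (Fintype.card ι - 1) + 1 < α j) (b : ℝ) :
    Tendsto (fun ε => mehtaIntegral γ ε b α) (𝓝[>] 0) (𝓝 (mehtaIntegral γ 0 b α)) := by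
  simpa [mehtaIntegral] using tendsto_integral_mul_mehtaIntegrand hγ hα b (p := fun _ _ => 1)
    (fun _ _ => continuous_const) (by simp) (by simpa using tendsto_mehtaIntegrand hγ b α)

lemma abs_mul_regInv_le_one (hε : 0 < ε) (d : ℝ) : |d * regInv ε d| ≤ 1 := by
  have hpos : 0 < d ^ 2 + ε := by positivity
  rw [regInv, ← mul_div_assoc, ← sq, abs_of_nonneg (by positivity), div_le_one hpos]
  exact le_add_of_nonneg_right hε.le

lemma tendsto_mul_regInv {d : ℝ} (hd : d ≠ 0) :
    Tendsto (fun ε => d * regInv ε d) (𝓝[>] 0) (𝓝 1) := by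
  have h : ContinuousAt (fun ε => d * regInv ε d) 0 :=
    continuousAt_const.mul (continuousAt_const.div (by fun_prop) (by positivity))
  convert! h.tendsto.mono_left nhdsWithin_le_nhds using 2
  simp [regInv]
  field_simp

lemma tendsto_integral_mul_regInv_mul_mehtaIntegrand (hγ : 0 < γ) {α : ι → ℝ}
    (hα : ∀ j, 2 * γ * (Fintype.card ι - 1) + 1 < α j) (b : ℝ) {j k : ι} (hjk : j ≠ k) :
    Tendsto (fun ε => ∫ l, ((l j - l k) * regInv ε (l j - l k) : ℝ) * mehtaIntegrand γ ε b α l)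
      (𝓝[>] 0) (𝓝 (mehtaIntegral γ 0 b α)) := by
  refine tendsto_integral_mul_mehtaIntegrand hγ.le hα b
    (p := fun ε l => (l j - l k) * regInv ε (l j - l k))
    (fun ε hε => by have := continuous_regInv hε; fun_prop)
    (fun ε hε _ => abs_mul_regInv_le_one hε _) fun l => ?_
  obtain h | h := eq_or_ne (l j) (l k)
  · simp [h, mehtaIntegrand, vandermondeWeight_zero_eq_zero hγ.ne' hjk h]
  · simpa using ((Complex.continuous_ofReal.tendsto _).comp
      (tendsto_mul_regInv (sub_ne_zero.2 h))).mul (tendsto_mehtaIntegrand hγ.le b α l)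

lemma mehtaIntegral_loweredExponents_insert_of_pos (hγ : 0 ≤ γ) (hε : 0 < ε) {a : ℝ}
    (ha : 2 * γ * (Fintype.card ι - 1) + 1 < a) (b : ℝ) {S : Finset ι} {j : ι} (hj : j ∉ S) :
    b * mehtaIntegral γ ε b (loweredExponents a (insert j S)) =
      a * mehtaIntegral γ ε b (loweredExponents a S) - γ * ∑ k ∈ (insert j S)ᶜ,
        ∫ l, ((l j - l k) * regInv ε (l j - l k) : ℝ) *
          mehtaIntegrand γ ε b (loweredExponents a S) l := by
  have hα := fun i => ha.trans_le (le_loweredExponents a S i)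
  have hαj := loweredExponents_of_notMem hj a
  have hins := loweredExponents_insert a S j
  have hins_j := loweredExponents_of_mem (mem_insert_self j S) a
  have hparts := mehtaIntegral_integral_by_parts hγ hε
    (fun i => ha.trans_le (le_loweredExponents a (insert j S) i)) b j
  rw [hins_j, hins, Function.update_idem, ← hαj, Function.update_eq_self, ← hins] at hparts
  rw [← sum_subset (subset_univ (insert j S)ᶜ) fun k _ hk =>
    integral_regInv_mul_mehtaIntegrand_eq_zero (hins_j.trans
      (loweredExponents_of_mem (notMem_compl.1 hk) a).symm) γ ε b] at hparts
  have hterm : ∀ k ∈ (insert j S)ᶜ,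
      ∫ l, regInv ε (l j - l k) * mehtaIntegrand γ ε b (loweredExponents a (insert j S)) l =
      -Complex.I / 2 * ∫ l, ((l j - l k) * regInv ε (l j - l k) : ℝ) *
        mehtaIntegrand γ ε b (loweredExponents a S) l := fun k hk => by
    have hk' : k ∉ S := fun h => by simp [h] at hk
    have h := integral_regInv_mul_mehtaIntegrand_update hγ hε hα (j := j) (k := k)
      (by rwa [hαj, add_sub_cancel_right]) (by rw [hαj, loweredExponents_of_notMem hk']) b
    rwa [hαj, add_sub_cancel_right, ← hins] at h
  rw [sum_congr rfl hterm, ← mul_sum] at hparts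
  linear_combination (-Complex.I) * hparts + Complex.I_mul_I *
    (b * mehtaIntegral γ ε b (loweredExponents a (insert j S)) -
      a * mehtaIntegral γ ε b (loweredExponents a S) +
      γ * ∑ k ∈ (insert j S)ᶜ, ∫ l, ((l j - l k) * regInv ε (l j - l k) : ℝ) *
        mehtaIntegrand γ ε b (loweredExponents a S) l)

lemma mehtaIntegral_loweredExponents_insert (hγ : 0 < γ) {a : ℝ}
    (ha : 2 * γ * (Fintype.card ι - 1) + 1 < a) (b : ℝ) {S : Finset ι} {j : ι} (hj : j ∉ S) :
    b * mehtaIntegral γ 0 b (loweredExponents a (insert j S)) =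
      (a - γ * (Fintype.card ι - 1 - #S)) * mehtaIntegral γ 0 b (loweredExponents a S) := by
  have hα := fun (T : Finset ι) (i : ι) => ha.trans_le (le_loweredExponents a T i)
  have hleft := (tendsto_mehtaIntegral hγ.le (hα (insert j S)) b).const_mul (b : ℂ)
  have hright := ((tendsto_mehtaIntegral hγ.le (hα S) b).const_mul (a : ℂ)).sub
    ((tendsto_finsetSum (insert j S)ᶜ fun k hk =>
      tendsto_integral_mul_regInv_mul_mehtaIntegrand hγ (hα S) b
        (show j ≠ k by rintro rfl; simp at hk)).const_mul (γ : ℂ))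
  have h := tendsto_nhds_unique hleft <| hright.congr' <| by
    filter_upwards [self_mem_nhdsWithin] with ε hε
    exact (mehtaIntegral_loweredExponents_insert_of_pos hγ.le hε ha b hj).symm
  have hcard : (#(insert j S)ᶜ : ℂ) = Fintype.card ι - 1 - #S := by
    rw [card_compl, Nat.cast_sub (card_le_univ _), card_insert_of_notMem hj]
    push_cast
    ring
  rw [h, sum_const, nsmul_eq_mul, hcard]
  ring

lemma pow_card_mul_mehtaIntegral_loweredExponents (hγ : 0 < γ) {a : ℝ}
    (ha : 2 * γ * (Fintype.card ι - 1) + 1 < a) (b : ℝ) (S : Finset ι) :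
    b ^ #S * mehtaIntegral γ 0 b (loweredExponents a S) =
      (∏ s ∈ range #S, ((a : ℂ) - γ * (Fintype.card ι - 1 - s))) *
        mehtaIntegral γ 0 b (fun _ : ι => a + 1) := by
  induction S using Finset.induction with
  | empty => simp [loweredExponents]
  | insert j S hj ih =>
    rw [card_insert_of_notMem hj, prod_range_succ, pow_succ, mul_assoc,
      mehtaIntegral_loweredExponents_insert hγ ha b hj]
    linear_combination ((a : ℂ) - γ * (Fintype.card ι - 1 - #S)) * ih

theorem pow_card_mul_mehtaIntegral (hγ : 0 < γ) {a : ℝ}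
    (ha : 2 * γ * (Fintype.card ι - 1) + 1 < a) (b : ℝ) :
    b ^ Fintype.card ι * mehtaIntegral γ 0 b (fun _ : ι => a) =
      (∏ s ∈ range (Fintype.card ι), ((a : ℂ) - γ * s)) *
        mehtaIntegral γ 0 b (fun _ : ι => a + 1) := by
  have h := pow_card_mul_mehtaIntegral_loweredExponents hγ ha b (univ : Finset ι)
  rw [card_univ, ← prod_range_reflect] at h
  convert! h using 2
  · simp [loweredExponents]
  · refine prod_congr rfl fun s hs => ?_
    have hs' := mem_range.1 hs
    rw [Nat.cast_sub (by omega), Nat.cast_pred (by omega)]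
    ring

end MehtaIntegral

section MehtaIntegralDeriv

variable {ι : Type*} [Fintype ι] [DecidableEq ι] {γ ε b : ℝ}

lemma hasDerivAt_mehtaIntegrand_left (γ ε b : ℝ) (α l : ι → ℝ) :
    HasDerivAt (fun b => mehtaIntegrand γ ε b α l)
      (∑ j, mehtaIntegrand γ ε b (Function.update α j (α j - 1)) l) b := by
  have h := (HasDerivAt.fun_finsetProd fun j (_ : j ∈ univ) =>
    hasDerivAt_hankelWeight_left b (α j) (l j)).const_mul (vandermondeWeight γ ε l : ℂ)
  convert! h using 1
  rw [mul_sum]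
  refine sum_congr rfl fun j _ => ?_
  rw [mehtaIntegrand_update, smul_eq_mul, compl_eq_univ_sdiff, sdiff_singleton_eq_erase]
  ring

lemma hasDerivAt_mehtaIntegral (hγ : 0 ≤ γ) (hε : 0 ≤ ε) {α : ι → ℝ}
    (hα : ∀ j, 2 * γ * (Fintype.card ι - 1) + 1 < α j - 1) (b : ℝ) :
    HasDerivAt (fun b => mehtaIntegral γ ε b α)
      (∑ j, mehtaIntegral γ ε b (Function.update α j (α j - 1))) b := by
  have hα' : ∀ j i, 2 * γ * (Fintype.card ι - 1) + 1 < Function.update α j (α j - 1) i :=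
    fun j i => by
      obtain rfl | hi := eq_or_ne i j
      · simpa using hα i
      · simpa [hi] using (hα i).trans (sub_one_lt _)
  have hint := fun b j => integrable_mehtaIntegrand hγ hε (hα' j) b
  have hint₀ := fun b => integrable_mehtaIntegrand hγ hε
    (fun j => (hα j).trans (sub_one_lt (α j))) b
  have h := (hasDerivAt_integral_of_dominated_loc_of_deriv_le (x₀ := b)
    (Iio_mem_nhds (lt_add_one b)) (.of_forall fun c => (hint₀ c).aestronglyMeasurable) (hint₀ b)
    (integrable_finsetSum univ fun j _ => hint b j).aestronglyMeasurable
    (bound := fun l => ∑ j, ‖mehtaIntegrand γ ε (b + 1) (Function.update α j (α j - 1)) l‖)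
    (.of_forall fun l c hc => (norm_sum_le _ _).trans <| sum_le_sum fun j _ =>
      norm_mehtaIntegrand_le hγ hε le_rfl (le_of_lt hc) _ l)
    (integrable_finsetSum _ fun j _ => (hint (b + 1) j).norm)
    (.of_forall fun l c _ => hasDerivAt_mehtaIntegrand_left γ ε c α l)).2
  rwa [integral_finsetSum _ fun j _ => hint b j] at h

lemma hasDerivAt_mehtaIntegral_const (hγ : 0 < γ) {a : ℝ}
    (ha : 2 * γ * (Fintype.card ι - 1) + 1 < a) (hb : 0 < b) :
    HasDerivAt (fun b => mehtaIntegral γ 0 b fun _ : ι => a + 1)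
      (Fintype.card ι * (a - γ * (Fintype.card ι - 1)) / b *
        mehtaIntegral γ 0 b fun _ : ι => a + 1) b := by
  convert! hasDerivAt_mehtaIntegral (α := fun _ : ι => a + 1) hγ.le le_rfl
    (fun _ => by simpa using ha) b using 1
  have hbC : (b : ℂ) ≠ 0 := Complex.ofReal_ne_zero.2 hb.ne'
  have hlower : ∀ j : ι, mehtaIntegral γ 0 b (Function.update (fun _ => a + 1) j (a + 1 - 1)) =
      (a - γ * (Fintype.card ι - 1)) / b * mehtaIntegral γ 0 b fun _ : ι => a + 1 := fun j => by
    have h := mehtaIntegral_loweredExponents_insert hγ ha b (notMem_empty j)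
    rw [loweredExponents_insert, loweredExponents, piecewise_empty, card_empty] at h
    rw [add_sub_cancel_right, div_mul_eq_mul_div, eq_div_iff hbC, mul_comm]
    simpa using h
  rw [sum_congr rfl fun j _ => hlower j, sum_const, card_univ, nsmul_eq_mul]
  ring

/-- The differential equation in `b` takes the place of rescaling the contour of integration. -/
lemma mehtaIntegral_eq_rpow_mul (hγ : 0 < γ) {a : ℝ}
    (ha : 2 * γ * (Fintype.card ι - 1) + 1 < a) (hb : 0 < b) :
    mehtaIntegral γ 0 b (fun _ : ι => a + 1) =
      (b ^ (Fintype.card ι * (a - γ * (Fintype.card ι - 1))) : ℝ) *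
        mehtaIntegral γ 0 1 fun _ : ι => a + 1 := by
  set κ : ℝ := Fintype.card ι * (a - γ * (Fintype.card ι - 1)) with hκ
  set f : ℝ → ℂ := fun c => (c ^ (-κ) : ℝ) * mehtaIntegral γ 0 c fun _ : ι => a + 1
  have hderiv : ∀ c ∈ Set.Ioi (0 : ℝ), HasDerivAt f 0 c := fun c hc => by
    have hc' : (c : ℂ) ≠ 0 := Complex.ofReal_ne_zero.2 (ne_of_gt hc)
    convert! (Real.hasDerivAt_rpow_const (p := -κ) (Or.inl (ne_of_gt hc))).ofReal_comp.mul
      (hasDerivAt_mehtaIntegral_const hγ ha hc) using 1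
    rw [Real.rpow_sub_one (ne_of_gt hc), hκ]
    push_cast
    field_simp
    ring
  have hconst : f b = f 1 := isOpen_Ioi.is_const_of_deriv_eq_zero isPreconnected_Ioi
    (fun c hc => (hderiv c hc).differentiableAt.differentiableWithinAt)
    (fun c hc => (hderiv c hc).deriv) hb (Set.mem_Ioi.2 one_pos)
  simp only [f, Real.one_rpow, Complex.ofReal_one, one_mul] at hconst
  rw [← hconst, ← mul_assoc, ← Complex.ofReal_mul, ← Real.rpow_add hb, add_neg_cancel,
    Real.rpow_zero, Complex.ofReal_one, one_mul]

end MehtaIntegralDeriv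

section ScaledHankelWeight

variable {γ t : ℝ}

lemma norm_I_mul_add_log_oneSubI_sub_le {u : ℝ} (hu : |u| ≤ 1 / 2) :
    ‖Complex.I * u + Complex.log (oneSubI u) - u ^ 2 / 2‖ ≤ |u| ^ 3 := by
  set z : ℂ := -(Complex.I * u) with hz
  have hnorm : ‖z‖ = |u| := by simp [hz]
  have htaylor : Complex.logTaylor (2 + 1) z = z - z ^ 2 / 2 := by
    simp [Complex.logTaylor_succ, Complex.logTaylor_zero]
    ring
  have hlog := Complex.norm_log_sub_logTaylor_le 2 (z := z) (by rw [hnorm]; linarith)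
  have hinv : (1 - |u|)⁻¹ ≤ 2 := inv_le_of_inv_le₀ two_pos (by linarith)
  calc ‖Complex.I * u + Complex.log (oneSubI u) - u ^ 2 / 2‖
      = ‖Complex.log (1 + z) - Complex.logTaylor (2 + 1) z‖ := by
        rw [htaylor, hz, oneSubI, ← sub_eq_add_neg, neg_sq, mul_pow, Complex.I_sq]
        ring_nf
    _ ≤ |u| ^ 3 * (1 - |u|)⁻¹ / 3 := by
        rw [hnorm] at hlog
        exact_mod_cast hlog
    _ ≤ |u| ^ 3 * 2 / 3 := by gcongr
    _ ≤ |u| ^ 3 := by linarith [pow_nonneg (abs_nonneg u) 3]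

/-- The weight in the numerator of `W_γ`: Hankel's weight with both parameters equal to `γ / t`,
normalised and rescaled so that it tends to the Gaussian weight as `t → 0⁺`. -/
noncomputable def scaledHankelWeight (γ t x : ℝ) : ℂ :=
  Real.exp (-(γ / t)) * hankelWeight (γ / t) (γ / t) (√t * x)

lemma continuous_scaledHankelWeight (γ t : ℝ) : Continuous (scaledHankelWeight γ t) :=
  continuous_const.mul ((continuous_hankelWeight _ _).comp (by fun_prop))

lemma scaledHankelWeight_eq (γ t x : ℝ) :
    scaledHankelWeight γ t x = Complex.exp (-(Complex.I * γ * x / √t)) *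
      (1 - Complex.I * √t * x) ^ ((-(γ / t) : ℝ) : ℂ) := by
  have hsqrt : (√t : ℂ) / t = 1 / √t := by exact_mod_cast Real.sqrt_div_self' (x := t)
  rw [scaledHankelWeight, hankelWeight, ← mul_assoc, Complex.ofReal_exp, ← Complex.exp_add]
  congr 2
  · rw [oneSubI]
    push_cast
    linear_combination (-Complex.I * γ * x) * hsqrt
  · rw [oneSubI]
    push_cast
    ring

lemma scaledHankelWeight_eq_exp (γ t x : ℝ) :
    scaledHankelWeight γ t x = Complex.exp
      (-(γ / t * (Complex.I * (√t * x : ℝ) + Complex.log (oneSubI (√t * x))))) := by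
  rw [scaledHankelWeight, hankelWeight, Complex.cpow_def_of_ne_zero (oneSubI_ne_zero _),
    Complex.ofReal_exp, ← Complex.exp_add, ← Complex.exp_add, oneSubI]
  congr 1
  push_cast
  ring

lemma norm_scaledHankelWeight (γ : ℝ) (ht : 0 ≤ t) (x : ℝ) :
    ‖scaledHankelWeight γ t x‖ = (1 + t * x ^ 2) ^ (-(γ / t) / 2) := by
  rw [scaledHankelWeight, norm_mul, norm_hankelWeight, Complex.norm_real, Real.norm_eq_abs,
    Real.abs_exp, ← mul_assoc, ← Real.exp_add, neg_add_cancel, Real.exp_zero, one_mul, mul_pow,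
    Real.sq_sqrt ht]

lemma norm_scaledHankelWeight_le (hγ : 0 ≤ γ) {t' : ℝ} (ht : 0 < t) (h : t ≤ t') (x : ℝ) :
    ‖scaledHankelWeight γ t x‖ ≤ ‖scaledHankelWeight γ t' x‖ := by
  have ht' : 0 < t' := ht.trans_le h
  have hbernoulli : 1 + t' * x ^ 2 ≤ (1 + t * x ^ 2) ^ (t' / t) := by
    have hx : 0 ≤ t * x ^ 2 := by positivity
    convert one_add_mul_self_le_rpow_one_add (s := t * x ^ 2) (by linarith)
      ((one_le_div ht).2 h) using 2
    field_simp
  rw [norm_scaledHankelWeight γ ht.le, norm_scaledHankelWeight γ ht'.le]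
  calc (1 + t * x ^ 2) ^ (-(γ / t) / 2)
      = ((1 + t * x ^ 2) ^ (t' / t)) ^ (-(γ / t') / 2) := by
        rw [← Real.rpow_mul (by positivity)]
        field_simp
    _ ≤ (1 + t' * x ^ 2) ^ (-(γ / t') / 2) :=
        Real.rpow_le_rpow_of_nonpos (by positivity) hbernoulli
          (by rw [neg_div, neg_nonpos]; positivity)

lemma norm_exponent_scaledHankelWeight_sub_le (γ : ℝ) (ht : 0 < t) {x : ℝ}
    (hx : |√t * x| ≤ 1 / 2) :
    ‖γ / t * (Complex.I * (√t * x : ℝ) + Complex.log (oneSubI (√t * x))) - γ / 2 * x ^ 2‖ ≤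
      √t * (|γ| * |x| ^ 3) := by
  have ht' : (t : ℂ) ≠ 0 := Complex.ofReal_ne_zero.2 ht.ne'
  have hsq : ((√t : ℝ) : ℂ) ^ 2 = t := by exact_mod_cast Real.sq_sqrt ht.le
  calc ‖γ / t * (Complex.I * (√t * x : ℝ) + Complex.log (oneSubI (√t * x))) - γ / 2 * x ^ 2‖
      = |γ| / t * ‖Complex.I * (√t * x : ℝ) + Complex.log (oneSubI (√t * x)) -
          ((√t * x : ℝ) : ℂ) ^ 2 / 2‖ := by
        rw [← abs_of_pos ht, ← abs_div, abs_of_pos ht, ← Real.norm_eq_abs, ← Complex.norm_real,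
          ← norm_mul, Complex.ofReal_mul √t x, mul_pow, hsq, Complex.ofReal_div]
        congr 1
        field_simp
    _ ≤ |γ| / t * |√t * x| ^ 3 := by gcongr; exact norm_I_mul_add_log_oneSubI_sub_le hx
    _ = √t * (|γ| * |x| ^ 3) := by
        rw [abs_mul, abs_of_nonneg (Real.sqrt_nonneg t), mul_pow, pow_succ √t, Real.sq_sqrt ht.le]
        field_simp

lemma tendsto_scaledHankelWeight (γ x : ℝ) :
    Tendsto (fun t => scaledHankelWeight γ t x) (𝓝[>] 0)
      (𝓝 (Real.exp (-(γ / 2) * x ^ 2) : ℝ)) := by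
  have hsqrt : Tendsto Real.sqrt (𝓝[>] 0) (𝓝 0) := by
    simpa using (Real.continuous_sqrt.tendsto 0).mono_left nhdsWithin_le_nhds
  have hsmall : ∀ᶠ t in 𝓝[>] 0, |√t * x| < 1 / 2 := by
    have h : Tendsto (fun t => |√t * x|) (𝓝[>] 0) (𝓝 0) := by simpa using (hsqrt.mul_const x).abs
    exact h.eventually_lt_const (by norm_num)
  have hexponent : Tendsto (fun t : ℝ =>
      γ / t * (Complex.I * (√t * x : ℝ) + Complex.log (oneSubI (√t * x)))) (𝓝[>] 0)
      (𝓝 (γ / 2 * x ^ 2)) := by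
    rw [tendsto_iff_norm_sub_tendsto_zero]
    refine squeeze_zero' (.of_forall fun _ => norm_nonneg _) (g := fun t => √t * (|γ| * |x| ^ 3))
      ?_ (by simpa using hsqrt.mul_const _)
    filter_upwards [hsmall, self_mem_nhdsWithin] with t hx ht
    exact norm_exponent_scaledHankelWeight_sub_le γ ht hx.le
  simp only [scaledHankelWeight_eq_exp]
  convert! (Complex.continuous_exp.tendsto _).comp hexponent.neg using 2
  push_cast
  ring_nf

end ScaledHankelWeight

section ScaledMehtaIntegral

variable {ι : Type*} [Fintype ι] [DecidableEq ι] {γ t : ℝ}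

/-- The integrand of the numerator of `W_γ`. -/
noncomputable def scaledMehtaIntegrand (γ t : ℝ) (l : ι → ℝ) : ℂ :=
  vandermondeWeight γ 0 l * ∏ j, scaledHankelWeight γ t (l j)

/-- The integrand of the denominator of `W_γ`. -/
noncomputable def gaussianMehtaIntegrand (γ : ℝ) (l : ι → ℝ) : ℝ :=
  vandermondeWeight γ 0 l * Real.exp (-(γ / 2) * ∑ j, l j ^ 2)

lemma continuous_scaledMehtaIntegrand (hγ : 0 ≤ γ) (t : ℝ) :
    Continuous (scaledMehtaIntegrand γ t : (ι → ℝ) → ℂ) :=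
  (Complex.continuous_ofReal.comp (continuous_vandermondeWeight hγ continuous_const
    continuous_id)).mul (continuous_finsetProd _ fun j _ =>
      (continuous_scaledHankelWeight γ t).comp (continuous_apply j))

lemma continuous_gaussianMehtaIntegrand (hγ : 0 ≤ γ) :
    Continuous (gaussianMehtaIntegrand γ : (ι → ℝ) → ℝ) :=
  (continuous_vandermondeWeight hγ continuous_const continuous_id).mul (by fun_prop)

lemma norm_scaledMehtaIntegrand_le (hγ : 0 ≤ γ) {t' : ℝ} (ht : 0 < t) (h : t ≤ t') (l : ι → ℝ) :
    ‖scaledMehtaIntegrand γ t l‖ ≤ ‖scaledMehtaIntegrand γ t' l‖ := by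
  simp only [scaledMehtaIntegrand, norm_mul, norm_prod]
  gcongr
  exact norm_scaledHankelWeight_le hγ ht h _

lemma tendsto_scaledMehtaIntegrand (γ : ℝ) (l : ι → ℝ) :
    Tendsto (fun t => scaledMehtaIntegrand γ t l) (𝓝[>] 0)
      (𝓝 (gaussianMehtaIntegrand γ l : ℝ)) := by
  rw [gaussianMehtaIntegrand, mul_sum, Real.exp_sum, Complex.ofReal_mul, Complex.ofReal_prod]
  exact (tendsto_finsetProd _ fun j _ => tendsto_scaledHankelWeight γ (l j)).const_mul _

lemma scaledMehtaIntegrand_eq (γ : ℝ) (ht : 0 < t) (l : ι → ℝ) :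
    scaledMehtaIntegrand γ t l = (Real.exp (-(γ / t)) ^ Fintype.card ι *
      (√t ^ (γ * (Fintype.card ι * (Fintype.card ι - 1))))⁻¹ : ℝ) *
        mehtaIntegrand γ 0 (γ / t) (fun _ => γ / t) (√t • l) := by
  rw [mehtaIntegrand, vandermondeWeight_smul (Real.sqrt_pos.2 ht), scaledMehtaIntegrand]
  set κ : ℝ := γ * (Fintype.card ι * (Fintype.card ι - 1))
  have hpow : ((√t ^ κ : ℝ) : ℂ) ≠ 0 :=
    Complex.ofReal_ne_zero.2 (Real.rpow_pos_of_pos (Real.sqrt_pos.2 ht) κ).ne'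
  simp only [scaledHankelWeight, prod_mul_distrib, prod_const, card_univ, Pi.smul_apply,
    smul_eq_mul]
  push_cast
  field_simp

lemma integrable_scaledMehtaIntegrand (hγ : 0 ≤ γ) (ht : 0 < t)
    (h : 2 * γ * (Fintype.card ι - 1) + 1 < γ / t) :
    Integrable (scaledMehtaIntegrand γ t : (ι → ℝ) → ℂ) := by
  rw [funext (scaledMehtaIntegrand_eq γ ht)]
  exact ((integrable_mehtaIntegrand hγ le_rfl (fun _ => h) (γ / t)).comp_smul
    (Real.sqrt_pos.2 ht).ne').const_mul _

lemma tendsto_const_div_nhdsGT_atTop (hγ : 0 < γ) :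
    Tendsto (fun t : ℝ => γ / t) (𝓝[>] 0) atTop :=
  tendsto_inv_nhdsGT_zero.const_mul_atTop hγ

lemma exists_integrable_scaledMehtaIntegrand (hγ : 0 < γ) :
    ∃ t > 0, Integrable (scaledMehtaIntegrand γ t : (ι → ℝ) → ℂ) := by
  obtain ⟨t, hlt, ht⟩ := (((tendsto_const_div_nhdsGT_atTop hγ).eventually_gt_atTop _).and
    self_mem_nhdsWithin).exists
  exact ⟨t, ht, integrable_scaledMehtaIntegrand hγ.le ht hlt⟩

lemma integrable_gaussianMehtaIntegrand (hγ : 0 < γ) :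
    Integrable (gaussianMehtaIntegrand γ : (ι → ℝ) → ℝ) := by
  obtain ⟨t₀, ht₀, hint⟩ := exists_integrable_scaledMehtaIntegrand (ι := ι) hγ
  refine hint.norm.mono' (continuous_gaussianMehtaIntegrand hγ.le).aestronglyMeasurable
    (.of_forall fun l => ?_)
  rw [← Complex.norm_real]
  refine le_of_tendsto (tendsto_scaledMehtaIntegrand γ l).norm ?_
  filter_upwards [Ioc_mem_nhdsGT ht₀] with t ht
  exact norm_scaledMehtaIntegrand_le hγ.le ht.1 ht.2 l

lemma integral_gaussianMehtaIntegrand_pos (hγ : 0 < γ) :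
    0 < ∫ l : ι → ℝ, gaussianMehtaIntegrand γ l := by
  have hnonneg : 0 ≤ (gaussianMehtaIntegrand γ : (ι → ℝ) → ℝ) := fun l =>
    mul_nonneg (vandermondeWeight_nonneg le_rfl l) (Real.exp_pos _).le
  rw [integral_pos_iff_support_of_nonneg hnonneg (integrable_gaussianMehtaIntegrand hγ)]
  refine (continuous_gaussianMehtaIntegrand hγ.le).isOpen_support.measure_pos _
    ⟨fun i => (Fintype.equivFin ι i : ℝ), ?_⟩
  have hinj : Function.Injective fun i : ι => (Fintype.equivFin ι i : ℝ) :=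
    Nat.cast_injective.comp (Fin.val_injective.comp (Fintype.equivFin ι).injective)
  exact (mul_pos (vandermondeWeight_pos hinj) (Real.exp_pos _)).ne'

lemma tendsto_integral_scaledMehtaIntegrand (hγ : 0 < γ) :
    Tendsto (fun t => ∫ l : ι → ℝ, scaledMehtaIntegrand γ t l) (𝓝[>] 0)
      (𝓝 (∫ l : ι → ℝ, gaussianMehtaIntegrand γ l : ℝ)) := by
  obtain ⟨t₀, ht₀, hint⟩ := exists_integrable_scaledMehtaIntegrand (ι := ι) hγ
  rw [← integral_complex_ofReal]
  refine tendsto_integral_filter_of_dominated_convergence _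
    (.of_forall fun t => (continuous_scaledMehtaIntegrand hγ.le t).aestronglyMeasurable)
    ?_ hint.norm (.of_forall fun l => tendsto_scaledMehtaIntegrand γ l)
  filter_upwards [Ioc_mem_nhdsGT ht₀] with t ht
  exact .of_forall fun l => norm_scaledMehtaIntegrand_le hγ.le ht.1 ht.2 l

lemma sum_stirlingSeries_zero (γ a : ℝ) (N : ℕ) :
    ∑ s ∈ range N, stirlingSeries 0 (-(γ * s)) a =
      (N * (a - 1 / 2) - γ * (N * (N - 1)) / 2) * Real.log a - N * a := by
  induction N with
  | zero => simp
  | succ n ih =>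
    rw [sum_range_succ, ih]
    simp only [stirlingSeries, range_zero, sum_empty]
    push_cast
    ring

lemma integral_scaledMehtaIntegrand (hγ : 0 < γ) {a : ℝ}
    (ha : 2 * γ * (Fintype.card ι - 1) + 2 < a) (ha₀ : 0 < a) :
    ∫ l : ι → ℝ, scaledMehtaIntegrand γ (γ / a) l =
      (γ ^ (-(Fintype.card ι + γ * (Fintype.card ι * (Fintype.card ι - 1))) / 2) *
        Real.exp (∑ s ∈ range (Fintype.card ι), stirlingSeries 0 (-(γ * s)) a) : ℝ) *
          mehtaIntegral γ 0 1 fun _ : ι => a := by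
  have ht : 0 < γ / a := by positivity
  have hpow := mehtaIntegral_eq_rpow_mul (ι := ι) hγ (a := a - 1) (by linarith) ha₀
  rw [sub_add_cancel] at hpow
  simp only [scaledMehtaIntegrand_eq γ ht, integral_const_mul, div_div_cancel₀ hγ.ne']
  rw [Measure.integral_comp_smul, ← mehtaIntegral, hpow, Complex.real_smul, ← mul_assoc,
    ← mul_assoc, ← Complex.ofReal_mul, ← Complex.ofReal_mul]
  congr 2
  rw [sum_stirlingSeries_zero, abs_of_pos (by positivity), Module.finrank_fintype_fun_eq_card,
    ← Real.exp_nat_mul, Real.sqrt_eq_rpow, ← Real.rpow_mul ht.le, ← Real.rpow_natCast,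
    ← Real.rpow_mul ht.le, Real.rpow_def_of_pos ht, Real.rpow_def_of_pos ht,
    Real.rpow_def_of_pos ha₀, Real.rpow_def_of_pos hγ, ← Real.exp_neg, ← Real.exp_neg,
    ← Real.exp_add, ← Real.exp_add, ← Real.exp_add, ← Real.exp_add,
    Real.log_div hγ.ne' ha₀.ne']
  ring_nf

lemma integral_scaledMehtaIntegrand_eq_exp_mul (hγ : 0 < γ) {a : ℝ}
    (ha : 2 * γ * (Fintype.card ι - 1) + 2 < a) (ha₀ : 0 < a) :
    ∫ l : ι → ℝ, scaledMehtaIntegrand γ (γ / a) l =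
      (Real.exp (∑ s ∈ range (Fintype.card ι), (stirlingSeries 0 (-(γ * s)) a -
        stirlingSeries 0 (-(γ * s)) (a + 1) + Real.log (a + -(γ * s)))) : ℝ) *
          ∫ l : ι → ℝ, scaledMehtaIntegrand γ (γ / (a + 1)) l := by
  have hfactor : ∀ s ∈ range (Fintype.card ι), 0 < a + -(γ * s) := fun s hs => by
    have hs' : (s : ℝ) ≤ Fintype.card ι - 1 := by
      rw [le_sub_iff_add_le]
      exact_mod_cast mem_range.1 hs
    nlinarith [mul_le_mul_of_nonneg_left hs' hγ.le, mul_nonneg hγ.le s.cast_nonneg]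
  have hraise := pow_card_mul_mehtaIntegral (ι := ι) hγ (a := a) (by linarith) 1
  have hprod : ∏ s ∈ range (Fintype.card ι), ((a : ℂ) - γ * s) =
      (Real.exp (∑ s ∈ range (Fintype.card ι), Real.log (a + -(γ * s))) : ℝ) := by
    rw [Real.exp_sum, Complex.ofReal_prod]
    refine prod_congr rfl fun s hs => ?_
    rw [Real.exp_log (hfactor s hs)]
    push_cast
    ring
  rw [Complex.ofReal_one, one_pow, one_mul, hprod] at hraise
  rw [integral_scaledMehtaIntegrand hγ ha ha₀,
    integral_scaledMehtaIntegrand hγ (by linarith) (by linarith), hraise, sum_add_distrib,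
    sum_sub_distrib, Real.exp_add, Real.exp_sub]
  push_cast
  field_simp

end ScaledMehtaIntegral

section Wre

variable {γ : ℝ}

lemma prod_prod_Ioi_abs_sub_rpow (γ : ℝ) {N : ℕ} (l : Fin N → ℝ) :
    ∏ i, ∏ j ∈ Ioi i, |l j - l i| ^ (2 * γ) = vandermondeWeight γ 0 l := by
  rw [vandermondeWeight, ← prod_prod_Ioi_mul_eq_prod_prod_off_diag
    fun i j => ((l j - l i) ^ 2 + 0) ^ (γ / 2)]
  refine prod_congr rfl fun i _ => prod_congr rfl fun j _ => ?_
  rw [add_zero, add_zero, ← neg_sub (l j) (l i), neg_sq, ← sq,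
    ← Real.rpow_mul_natCast (sq_nonneg _), ← sq_abs, ← Real.rpow_natCast_mul (abs_nonneg _)]
  congr 1
  push_cast
  ring

lemma Wre_eq (γ : ℝ) (N : ℕ) (t : ℝ) :
    Wre γ N t = (∫ l : Fin N → ℝ, scaledMehtaIntegrand γ t l).re /
      ∫ l : Fin N → ℝ, gaussianMehtaIntegrand γ l := by
  simp only [Wre, scaledMehtaIntegrand, gaussianMehtaIntegrand, scaledHankelWeight_eq,
    ← prod_prod_Ioi_abs_sub_rpow, Complex.ofReal_prod]

lemma tendsto_Wre (hγ : 0 < γ) (N : ℕ) : Tendsto (Wre γ N) (𝓝[>] 0) (𝓝 1) := by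
  have h := ((Complex.continuous_re.tendsto _).comp
    (tendsto_integral_scaledMehtaIntegrand (ι := Fin N) hγ)).div_const
      (∫ l : Fin N → ℝ, gaussianMehtaIntegrand γ l)
  rw [Complex.ofReal_re, div_self (integral_gaussianMehtaIntegrand_pos hγ).ne'] at h
  exact h.congr fun t => (Wre_eq γ N t).symm

lemma Wre_div_eq_exp_mul (hγ : 0 < γ) {N : ℕ} {a : ℝ} (ha : 2 * γ * (N - 1) + 2 < a)
    (ha₀ : 0 < a) :
    Wre γ N (γ / a) = Real.exp (∑ s ∈ range N, (stirlingSeries 0 (-(γ * s)) a -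
      stirlingSeries 0 (-(γ * s)) (a + 1) + Real.log (a + -(γ * s)))) *
        Wre γ N (γ / (a + 1)) := by
  rw [Wre_eq, Wre_eq, integral_scaledMehtaIntegrand_eq_exp_mul hγ (by simpa using ha) ha₀,
    Complex.re_ofReal_mul, mul_div_assoc, Fintype.card_fin]

lemma tendsto_const_div_atTop_nhdsGT (hγ : 0 < γ) :
    Tendsto (fun z : ℝ => γ / z) atTop (𝓝[>] 0) :=
  tendsto_nhdsWithin_iff.2 ⟨tendsto_const_nhds.div_atTop tendsto_id,
    (eventually_gt_atTop 0).mono fun _ hz => div_pos hγ hz⟩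

lemma eventually_log_Wre_div_sub (hγ : 0 < γ) (N : ℕ) :
    ∀ᶠ z in atTop, Real.log (Wre γ N (γ / z)) - Real.log (Wre γ N (γ / (z + 1))) =
      ∑ s ∈ range N, (stirlingSeries 0 (-(γ * s)) z - stirlingSeries 0 (-(γ * s)) (z + 1) +
        Real.log (z + -(γ * s))) := by
  have hpos : ∀ᶠ z in atTop, 0 < Wre γ N (γ / (z + 1)) :=
    (tendsto_atTop_add_const_right atTop 1 tendsto_id).eventually <|
      ((tendsto_Wre hγ N).comp (tendsto_const_div_atTop_nhdsGT hγ)).eventually_const_lt one_pos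
  filter_upwards [eventually_gt_atTop 0, eventually_gt_atTop (2 * γ * (N - 1) + 2),
    hpos] with z hz₀ hz hpos'
  rw [Wre_div_eq_exp_mul hγ hz hz₀, Real.log_mul (Real.exp_pos _).ne' hpos'.ne',
    Real.log_exp, add_sub_cancel_right]

lemma isBigO_log_Wre_div_add_sum_stirlingCoeff (hγ : 0 < γ) (N M : ℕ) :
    (fun z => Real.log (Wre γ N (γ / z)) +
      ∑ s ∈ range N, ∑ k ∈ range M, stirlingCoeff k (-(γ * s)) * z⁻¹ ^ (k + 1))
      =O[atTop] fun z : ℝ => z⁻¹ ^ (M + 1) := by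
  have hlog : Tendsto (fun z => Real.log (Wre γ N (γ / z))) atTop (𝓝 0) := by
    simpa using ((tendsto_Wre hγ N).comp (tendsto_const_div_atTop_nhdsGT hγ)).log one_ne_zero
  exact isBigO_add_sum_stirlingCoeff (range N) (fun s => -(γ * s)) hlog
    (eventually_log_Wre_div_sub hγ N) M

theorem stmt8_general (hγ : 0 < γ) (N M : ℕ) :
    (fun t : ℝ =>
        Real.log (Wre γ N t) -
          (-(γ * N) *
              ∑ k ∈ (Finset.Icc 1 M).filter (fun k => 2 * k - 1 ≤ M),
                (bernoulli (2 * k) : ℝ) * t ^ (2 * k - 1) /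
                  ((2 * k * (2 * k - 1) : ℕ) : ℝ) +
            ∑ δ ∈ Finset.Icc 1 M,
              t ^ δ / ((δ * (δ + 1) : ℕ) : ℝ) *
                ∑ r ∈ Finset.Icc 1 (δ + 1),
                  ((δ + 1).choose r : ℝ) * (bernoulli (δ + 1 - r) : ℝ) *
                    ((N : ℝ) ^ r * (-1 : ℝ) ^ ((δ : ℤ) + 1 - (r : ℤ)) *
                        γ ^ (-((δ : ℤ) - (r : ℤ))) -
                      ∑ m ∈ Finset.Icc 1 (r + 1),
                        ((r + 1).choose m : ℝ) *
                          ((bernoulli (r + 1 - m) : ℝ) / ((r : ℝ) + 1)) *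
                          ((N : ℝ) ^ m * γ ^ (-((r : ℤ) - (m : ℤ)))) *
                          (-1 : ℝ) ^ ((δ : ℤ) - (m : ℤ)))))
      =O[𝓝[>] 0] fun t : ℝ => t ^ (M + 1) := by
  have h := (isBigO_log_Wre_div_add_sum_stirlingCoeff hγ N M).comp_tendsto
    (tendsto_const_div_nhdsGT_atTop hγ)
  refine (h.trans ?_).congr_left fun t => ?_
  · refine (isBigO_refl (fun t : ℝ => t ^ (M + 1)) _).const_mul_left (γ⁻¹ ^ (M + 1)) |>.congr_left
      fun t => ?_
    rw [Function.comp_apply, inv_div, div_eq_inv_mul, mul_pow]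
  · rw [expansion_eq_neg_sum_stirlingCoeff N M hγ.ne', Function.comp_apply,
      div_div_cancel₀ hγ.ne', sub_neg_eq_add]

end Wre

/-- With `γ = 1/q` and `x = qK` for positive integers `q, K`, for every positive
integer `M`, as `t → 0⁺`:
`log W_γ(x,t) = -γx ∑_{k≥1, 2k-1≤M} B_{2k} t^{2k-1}/(2k(2k-1))
  + ∑_{δ=1}^{M} (t^δ/(δ(δ+1))) ∑_{r=1}^{δ+1} C(δ+1,r) B_{δ+1-r}
      (x^r (-1)^{δ+1-r}/γ^{δ-r}
        - ∑_{m=1}^{r+1} C(r+1,m) (B_{r+1-m}/(r+1)) (x^m/γ^{r-m}) (-1)^{δ-m})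
  + O(t^{M+1})`. -/
theorem stmt8 (q K : ℕ) (hq : 0 < q) (hK : 0 < K) (γ x : ℝ)
    (hγ : γ = 1 / q) (hx : x = q * K) (M : ℕ) (hM : 0 < M) :
    (fun t : ℝ =>
        Real.log (Wre γ (q * K) t) -
          (-(γ * x) *
              ∑ k ∈ (Finset.Icc 1 M).filter (fun k => 2 * k - 1 ≤ M),
                (bernoulli (2 * k) : ℝ) * t ^ (2 * k - 1) /
                  ((2 * k * (2 * k - 1) : ℕ) : ℝ) +
            ∑ δ ∈ Finset.Icc 1 M,
              t ^ δ / ((δ * (δ + 1) : ℕ) : ℝ) *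
                ∑ r ∈ Finset.Icc 1 (δ + 1),
                  ((δ + 1).choose r : ℝ) * (bernoulli (δ + 1 - r) : ℝ) *
                    (x ^ r * (-1 : ℝ) ^ ((δ : ℤ) + 1 - (r : ℤ)) *
                        γ ^ (-((δ : ℤ) - (r : ℤ))) -
                      ∑ m ∈ Finset.Icc 1 (r + 1),
                        ((r + 1).choose m : ℝ) *
                          ((bernoulli (r + 1 - m) : ℝ) / ((r : ℝ) + 1)) *
                          (x ^ m * γ ^ (-((r : ℤ) - (m : ℤ)))) *
                          (-1 : ℝ) ^ ((δ : ℤ) - (m : ℤ)))))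
      =O[nhdsWithin 0 (Set.Ioi 0)] fun t : ℝ => t ^ (M + 1) := by
  subst hγ hx
  exact_mod_cast stmt8_general (γ := 1 / q) (by positivity) (q * K) M
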